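/- Let 1 < c < 37/18 with c ≠ 2. Then for every fixed η > 0, ∫_{τ}^{K} |S(x)|⁴ |Φ(x)|² dx ≪ (X^{4−c} + X²)·X^η, where the implied constant depends only on c and η. -/

import Mathlib

open MeasureTheory

noncomputable def e (t : ℝ) : ℂ := Complex.exp (2 * Real.pi * Complex.I * t)

/-- The exponential sum `S(x) = Σ_{X/2 < p ≤ X} (log p) e(p^c x)` over primes. -/
noncomputable def S (X c : ℝ) (x : ℝ) : ℂ :=
  ∑ p ∈ (Finset.range (⌈X⌉₊ + 1)).filter
      (fun p : ℕ => p.Prime ∧ X / 2 < (p : ℝ) ∧ (p : ℝ) ≤ X),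
    (Real.log p : ℂ) * e ((p : ℝ) ^ c * x)

/-! The substitution `t = x X ^ c` turns the fourth moment of `S` into one of
`∑ aₙ e(t (n / X) ^ c)`. For such a moment only the size of the coefficients matters
(Montgomery–Vaughan majorant principle), so the weighted primes may be replaced by a smooth weight
`ω (n / X)`, up to a bounded factor. Poisson summation and stationary phase at scale `t ≍ P`
transform the smooth sum into a sum of length `P / X` whose phases involve the dual powers `m ^ c'`,
`c' = c / (c - 1)`. A fourth moment bound for `c'` which loses `X ^ θ` over the diagonal
contribution therefore gives a bound of diagonal size for `c` on the shorter range
`t ≤ X ^ (2 - θ / (1 + θ))`, and covering `[0, X ^ 2]` by translates of it yields a bound for `c`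
which loses only `X ^ (θ / (1 + θ) + ε)`. Since duality is an involution, iterating from the trivial
exponent `θ = 2` brings the loss below any `η > 0`. -/

lemma e_add (a b : ℝ) : e (a + b) = e a * e b := by
  simp only [e, ← Complex.exp_add]
  push_cast
  ring_nf

lemma norm_e (t : ℝ) : ‖e t‖ = 1 := by
  have h : (2 * Real.pi * Complex.I * t : ℂ) = (2 * Real.pi * t : ℝ) * Complex.I := by
    push_cast; ring
  rw [e, h, Complex.norm_exp_ofReal_mul_I]

lemma conj_e (t : ℝ) : (starRingEnd ℂ) (e t) = e (-t) := by
  simp [e, ← Complex.exp_conj, Complex.conj_ofNat]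

@[fun_prop]
lemma continuous_e : Continuous e := by unfold e; fun_prop

lemma hasDerivAt_e_comp {f : ℝ → ℝ} {f' x : ℝ} (hf : HasDerivAt f f' x) :
    HasDerivAt (fun x ↦ e (f x)) (2 * Real.pi * Complex.I * f' * e (f x)) x := by
  have h := (hf.ofReal_comp.const_mul (2 * Real.pi * Complex.I : ℂ)).cexp
  exact h.congr_deriv (by rw [e]; ring)

/-- The exponential polynomial `t ↦ Σ_{i ∈ s} a_i e(t μ_i)` with frequencies `μ_i`. -/
noncomputable def expSum {ι : Type*} (s : Finset ι) (a : ι → ℂ) (μ : ι → ℝ) (t : ℝ) : ℂ :=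
  ∑ i ∈ s, a i * e (t * μ i)

section ExpSum

variable {ι : Type*} (s : Finset ι) (a : ι → ℂ) (μ : ι → ℝ)

@[fun_prop]
lemma continuous_expSum : Continuous (expSum s a μ) := by unfold expSum; fun_prop

lemma expSum_add (t u : ℝ) :
    expSum s a μ (t + u) = expSum s (fun i ↦ a i * e (u * μ i)) μ t := by
  refine Finset.sum_congr rfl fun i _ ↦ ?_
  rw [add_mul, e_add]
  ring

lemma expSum_const_mul (A : ℂ) (t : ℝ) :
    expSum s (fun i ↦ A * a i) μ t = A * expSum s a μ t := by
  simp only [expSum, Finset.mul_sum, mul_assoc]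

lemma expSum_sq (t : ℝ) :
    expSum s a μ t ^ 2 = expSum (s ×ˢ s) (fun p ↦ a p.1 * a p.2) (fun p ↦ μ p.1 + μ p.2) t := by
  rw [expSum, expSum, sq, Finset.sum_mul_sum, ← Finset.sum_product']
  refine Finset.sum_congr rfl fun p _ ↦ ?_
  rw [mul_add, e_add]
  ring

lemma norm_expSum_neg (t : ℝ) :
    ‖expSum s a μ (-t)‖ = ‖expSum s (fun i ↦ (starRingEnd ℂ) (a i)) μ t‖ := by
  rw [← Complex.norm_conj, expSum, expSum, map_sum]
  simp only [map_mul, conj_e, neg_mul, neg_neg]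

variable {s a} in
lemma norm_expSum_le_card_mul {B : ℝ} (ha : ∀ i ∈ s, ‖a i‖ ≤ B) (t : ℝ) :
    ‖expSum s a μ t‖ ≤ s.card * B := by
  refine (norm_sum_le_of_le s fun i hi ↦ ?_).trans_eq (by rw [Finset.sum_const, nsmul_eq_mul])
  rw [norm_mul, norm_e, mul_one]
  exact ha i hi

lemma normSq_expSum (t : ℝ) :
    ((‖expSum s a μ t‖ ^ 2 : ℝ) : ℂ) =
      ∑ i ∈ s, ∑ j ∈ s, a i * (starRingEnd ℂ) (a j) * e (t * (μ i - μ j)) := by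
  rw [Complex.ofReal_pow, ← Complex.mul_conj', expSum, map_sum, Finset.sum_mul_sum]
  refine Finset.sum_congr rfl fun i _ ↦ Finset.sum_congr rfl fun j _ ↦ ?_
  rw [mul_sub, sub_eq_add_neg, e_add, map_mul, conj_e]
  ring

lemma integral_integral_e_sub_mul (T μ : ℝ) :
    ∫ u in (0 : ℝ)..T, ∫ v in (0 : ℝ)..T, e ((v - u) * μ) =
      ((‖∫ v in (0 : ℝ)..T, e (v * μ)‖ ^ 2 : ℝ) : ℂ) := by
  have split (u v : ℝ) : e ((v - u) * μ) = e (v * μ) * e (-(u * μ)) := by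
    rw [← e_add]; ring_nf
  simp only [split, intervalIntegral.integral_mul_const, intervalIntegral.integral_const_mul]
  rw [Complex.ofReal_pow, ← Complex.mul_conj']
  simp only [intervalIntegral, map_sub, ← integral_conj, conj_e]

lemma integral_integral_normSq_expSum (T : ℝ) :
    ((∫ u in (0 : ℝ)..T, ∫ v in (0 : ℝ)..T, ‖expSum s a μ (v - u)‖ ^ 2 : ℝ) : ℂ) =
      ∑ i ∈ s, ∑ j ∈ s, a i * (starRingEnd ℂ) (a j) *
        ((‖∫ v in (0 : ℝ)..T, e (v * (μ i - μ j))‖ ^ 2 : ℝ) : ℂ) := by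
  simp_rw [← intervalIntegral.integral_ofReal, normSq_expSum, ← integral_integral_e_sub_mul]
  have cont (i j : ι) : Continuous fun u : ℝ ↦
      ∫ v in (0 : ℝ)..T, a i * (starRingEnd ℂ) (a j) * e ((v - u) * (μ i - μ j)) :=
    intervalIntegral.continuous_parametric_intervalIntegral_of_continuous' (by fun_prop) 0 T
  have inner (u : ℝ) : ∫ v in (0 : ℝ)..T, ∑ i ∈ s, ∑ j ∈ s,
        a i * (starRingEnd ℂ) (a j) * e ((v - u) * (μ i - μ j)) =
      ∑ i ∈ s, ∑ j ∈ s, ∫ v in (0 : ℝ)..T,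
        a i * (starRingEnd ℂ) (a j) * e ((v - u) * (μ i - μ j)) := by
    rw [intervalIntegral.integral_finsetSum fun i _ ↦
      Continuous.intervalIntegrable (by fun_prop) _ _]
    refine Finset.sum_congr rfl fun i _ ↦ intervalIntegral.integral_finsetSum fun j _ ↦ ?_
    exact Continuous.intervalIntegrable (by fun_prop) _ _
  simp only [inner, ← intervalIntegral.integral_const_mul]
  rw [intervalIntegral.integral_finsetSum fun i _ ↦
    (continuous_finsetSum s fun j _ ↦ cont i j).intervalIntegrable _ _]
  refine Finset.sum_congr rfl fun i _ ↦ intervalIntegral.integral_finsetSum fun j _ ↦ ?_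
  exact (cont i j).intervalIntegrable _ _

end ExpSum

section DoubleAverage

variable {F : ℝ → ℝ} (hF : Continuous F) (hF₀ : ∀ t, 0 ≤ F t) {T : ℝ} (hT : 0 ≤ T)

include hF

lemma continuous_integral_comp_sub :
    Continuous fun u : ℝ ↦ ∫ v in (0 : ℝ)..T, F (v - u) :=
  intervalIntegral.continuous_parametric_intervalIntegral_of_continuous' (by fun_prop) 0 T

include hF₀ hT

lemma mul_integral_le_integral_integral_comp_sub :
    T * ∫ t in (0 : ℝ)..T, F t ≤
      ∫ u in (0 : ℝ)..2 * T, ∫ v in (0 : ℝ)..2 * T, F (v - u) := by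
  have cont := continuous_integral_comp_sub (T := 2 * T) hF
  calc T * ∫ t in (0 : ℝ)..T, F t = ∫ _u in (0 : ℝ)..T, ∫ t in (0 : ℝ)..T, F t := by simp
    _ ≤ ∫ u in (0 : ℝ)..T, ∫ v in (0 : ℝ)..2 * T, F (v - u) := by
      refine intervalIntegral.integral_mono_on hT (by simp) (cont.intervalIntegrable _ _)
        fun u hu ↦ ?_
      rw [intervalIntegral.integral_comp_sub_right F u]
      exact intervalIntegral.integral_mono_interval (by linarith [hu.1]) hT (by linarith [hu.2])
        (.of_forall hF₀) (hF.intervalIntegrable _ _)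
    _ ≤ ∫ u in (0 : ℝ)..2 * T, ∫ v in (0 : ℝ)..2 * T, F (v - u) :=
      intervalIntegral.integral_mono_interval le_rfl hT (by linarith)
        (.of_forall fun u ↦ intervalIntegral.integral_nonneg (by linarith) fun v _ ↦ hF₀ _)
        (cont.intervalIntegrable _ _)

lemma integral_integral_comp_sub_le_mul_integral :
    ∫ u in (0 : ℝ)..T, ∫ v in (0 : ℝ)..T, F (v - u) ≤ T * ∫ t in -T..T, F t := by
  have cont := continuous_integral_comp_sub (T := T) hF
  calc ∫ u in (0 : ℝ)..T, ∫ v in (0 : ℝ)..T, F (v - u)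
    _ ≤ ∫ _u in (0 : ℝ)..T, ∫ t in -T..T, F t := by
      refine intervalIntegral.integral_mono_on hT (cont.intervalIntegrable _ _) (by simp)
        fun u hu ↦ ?_
      rw [intervalIntegral.integral_comp_sub_right F u]
      exact intervalIntegral.integral_mono_interval (by linarith [hu.2]) (by linarith)
        (by linarith [hu.1]) (.of_forall hF₀) (hF.intervalIntegrable _ _)
    _ = T * ∫ t in -T..T, F t := by simp

end DoubleAverage

section Majorant

variable {ι : Type*} {s : Finset ι} {a : ι → ℂ} {w : ι → ℝ} (μ : ι → ℝ)
  (haw : ∀ i ∈ s, ‖a i‖ ≤ w i)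

include haw

-- The double average has nonnegative coefficients `|∫₀ᵀ e(v(μ_i - μ_j)) dv|²`.
lemma integral_integral_normSq_expSum_le_of_norm_le (T : ℝ) :
    ∫ u in (0 : ℝ)..T, ∫ v in (0 : ℝ)..T, ‖expSum s a μ (v - u)‖ ^ 2 ≤
      ∫ u in (0 : ℝ)..T, ∫ v in (0 : ℝ)..T, ‖expSum s (fun i ↦ w i) μ (v - u)‖ ^ 2 := by
  set J : ι → ι → ℝ := fun i j ↦ ‖∫ v in (0 : ℝ)..T, e (v * (μ i - μ j))‖ ^ 2
  have majorant_eq :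
      ∫ u in (0 : ℝ)..T, ∫ v in (0 : ℝ)..T, ‖expSum s (fun i ↦ w i) μ (v - u)‖ ^ 2 =
        ∑ i ∈ s, ∑ j ∈ s, w i * w j * J i j := by
    have h := integral_integral_normSq_expSum s (fun i ↦ (w i : ℂ)) μ T
    simp only [Complex.conj_ofReal] at h
    exact_mod_cast h
  refine (le_abs_self _).trans ?_
  rw [← Real.norm_eq_abs, ← Complex.norm_real, integral_integral_normSq_expSum, majorant_eq]
  refine norm_sum_le_of_le _ fun i hi ↦ norm_sum_le_of_le _ fun j hj ↦ ?_
  rw [norm_mul, norm_mul, RCLike.norm_conj, Complex.norm_real,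
    Real.norm_of_nonneg (by positivity : 0 ≤ J i j)]
  have := (norm_nonneg _).trans (haw i hi)
  gcongr
  exacts [haw i hi, haw j hj]

lemma integral_normSq_expSum_le_of_norm_le {T : ℝ} (hT : 0 < T) :
    ∫ t in (0 : ℝ)..T, ‖expSum s a μ t‖ ^ 2 ≤
      2 * ∫ t in -(2 * T)..2 * T, ‖expSum s (fun i ↦ w i) μ t‖ ^ 2 := by
  have h : T * ∫ t in (0 : ℝ)..T, ‖expSum s a μ t‖ ^ 2 ≤
      2 * T * ∫ t in -(2 * T)..2 * T, ‖expSum s (fun i ↦ w i) μ t‖ ^ 2 :=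
    calc _ ≤ _ := mul_integral_le_integral_integral_comp_sub
          (F := fun t ↦ ‖expSum s a μ t‖ ^ 2) (by fun_prop) (fun _ ↦ by positivity) hT.le
      _ ≤ _ := integral_integral_normSq_expSum_le_of_norm_le μ haw _
      _ ≤ _ := integral_integral_comp_sub_le_mul_integral
          (F := fun t ↦ ‖expSum s (fun i ↦ w i) μ t‖ ^ 2) (by fun_prop)
          (fun _ ↦ by positivity) (by linarith)
  nlinarith

lemma integral_norm_expSum_pow_four_le_of_norm_le {T : ℝ} (hT : 0 < T) :
    ∫ t in (0 : ℝ)..T, ‖expSum s a μ t‖ ^ 4 ≤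
      4 * ∫ t in (0 : ℝ)..2 * T, ‖expSum s (fun i ↦ w i) μ t‖ ^ 4 := by
  set F : ℝ → ℝ := fun t ↦ ‖expSum s (fun i ↦ w i) μ t‖ ^ 4
  have norm_pow_four (b : ι → ℂ) (t : ℝ) : ‖expSum s b μ t‖ ^ 4 =
      ‖expSum (s ×ˢ s) (fun p ↦ b p.1 * b p.2) (fun p ↦ μ p.1 + μ p.2) t‖ ^ 2 := by
    rw [← expSum_sq, norm_pow]
    ring
  have product_majorant : ∀ p ∈ s ×ˢ s, ‖a p.1 * a p.2‖ ≤ w p.1 * w p.2 := by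
    intro p hp
    obtain ⟨h₁, h₂⟩ := Finset.mem_product.1 hp
    rw [norm_mul]
    have := (norm_nonneg _).trans (haw _ h₁)
    gcongr
    exacts [haw _ h₁, haw _ h₂]
  have even : ∫ t in -(2 * T)..0, F t = ∫ t in (0 : ℝ)..2 * T, F t := by
    rw [← neg_zero, ← intervalIntegral.integral_comp_neg, neg_zero]
    simp only [F, norm_expSum_neg, Complex.conj_ofReal]
  have cont : Continuous F := by fun_prop
  calc ∫ t in (0 : ℝ)..T, ‖expSum s a μ t‖ ^ 4
    _ ≤ 2 * ∫ t in -(2 * T)..2 * T, F t := by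
      simp only [F, norm_pow_four]
      have h := integral_normSq_expSum_le_of_norm_le (fun p ↦ μ p.1 + μ p.2) product_majorant hT
      simpa only [Complex.ofReal_mul] using h
    _ = 4 * ∫ t in (0 : ℝ)..2 * T, F t := by
      rw [← intervalIntegral.integral_add_adjacent_intervals (cont.intervalIntegrable _ 0)
        (cont.intervalIntegrable _ _), even]
      ring

end Majorant

/-- The fourth moment estimate for exponential sums with phases `t (n / Z) ^ α`, `n ∈ [Z / R, Z]`,
over `0 ≤ t ≤ Z ^ 2`, with a loss of `Z ^ θ` over the diagonal contribution `Z ^ 4`, uniformly in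
the coefficients. -/
def FourthMomentBound (α θ : ℝ) : Prop :=
  ∀ R : ℝ, 1 ≤ R → ∃ C > 0, ∀ Z : ℝ, 1 ≤ Z → ∀ (s : Finset ℕ) (a : ℕ → ℂ),
    (∀ n ∈ s, (n : ℝ) ∈ Set.Icc (Z / R) Z) → (∀ n ∈ s, ‖a n‖ ≤ 1) →
    ∫ t in (0 : ℝ)..Z ^ 2, ‖expSum s a (fun n ↦ ((n : ℝ) / Z) ^ α) t‖ ^ 4 ≤ C * Z ^ (4 + θ)

lemma FourthMomentBound.mono {α θ θ' : ℝ} (h : FourthMomentBound α θ) (hθ : θ ≤ θ') :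
    FourthMomentBound α θ' := by
  intro R hR
  obtain ⟨C, hC, hbound⟩ := h R hR
  refine ⟨C, hC, fun Z hZ s a hs ha ↦ (hbound Z hZ s a hs ha).trans ?_⟩
  gcongr

lemma card_le_two_mul_of_forall_le {s : Finset ℕ} {Z : ℝ} (hZ : 1 ≤ Z)
    (hs : ∀ n ∈ s, (n : ℝ) ≤ Z) : (s.card : ℝ) ≤ 2 * Z := by
  have hsub : s ⊆ Finset.range (⌊Z⌋₊ + 1) := fun n hn ↦
    Finset.mem_range_succ_iff.2 (Nat.le_floor (hs n hn))
  have hcard : (s.card : ℝ) ≤ ⌊Z⌋₊ + 1 := by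
    exact_mod_cast (Finset.card_le_card hsub).trans_eq (Finset.card_range _)
  linarith [Nat.floor_le (by linarith : 0 ≤ Z)]

lemma fourthMomentBound_two (α : ℝ) : FourthMomentBound α 2 := by
  intro R _
  refine ⟨16, by norm_num, fun Z hZ s a hs ha ↦ ?_⟩
  set μ : ℕ → ℝ := fun n ↦ ((n : ℝ) / Z) ^ α
  have pointwise (t : ℝ) : ‖expSum s a μ t‖ ^ 4 ≤ (2 * Z) ^ 4 := by
    gcongr
    simpa using (norm_expSum_le_card_mul μ ha t).trans
      (by simpa using card_le_two_mul_of_forall_le hZ fun n hn ↦ (hs n hn).2)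
  calc ∫ t in (0 : ℝ)..Z ^ 2, ‖expSum s a μ t‖ ^ 4
    _ ≤ ∫ _t in (0 : ℝ)..Z ^ 2, (2 * Z) ^ 4 :=
      intervalIntegral.integral_mono_on (by positivity)
        (Continuous.intervalIntegrable (by fun_prop) _ _) (by simp) fun t _ ↦ pointwise t
    _ = 16 * Z ^ (4 + 2 : ℝ) := by
      rw [intervalIntegral.integral_const, smul_eq_mul, show (4 : ℝ) + 2 = (6 : ℕ) by norm_num,
        Real.rpow_natCast]
      ring

lemma integral_le_of_forall_integral_translate_le {F : ℝ → ℝ} (hF : Continuous F)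
    (hF₀ : ∀ t, 0 ≤ F t) {T₀ T B : ℝ} (hT₀ : 0 < T₀) (hT : 0 ≤ T)
    (h : ∀ k : ℕ, ∫ t in (0 : ℝ)..T₀, F (t + k * T₀) ≤ B) :
    ∫ t in (0 : ℝ)..T, F t ≤ (T / T₀ + 1) * B := by
  set N := ⌈T / T₀⌉₊
  have hB : 0 ≤ B :=
    (intervalIntegral.integral_nonneg hT₀.le fun t _ ↦ hF₀ _).trans (h 0)
  have le_mul : T ≤ N * T₀ := (div_le_iff₀ hT₀).1 (Nat.le_ceil _)
  have translate (k : ℕ) : ∫ t in (k * T₀)..((k + 1 : ℕ) * T₀), F t ≤ B := by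
    refine (h k).trans_eq' ?_
    rw [intervalIntegral.integral_comp_add_right]
    push_cast
    ring_nf
  calc ∫ t in (0 : ℝ)..T, F t ≤ ∫ t in (0 : ℝ)..N * T₀, F t :=
        intervalIntegral.integral_mono_interval le_rfl hT le_mul (.of_forall hF₀)
          (hF.intervalIntegrable _ _)
    _ = ∑ k ∈ Finset.range N, ∫ t in (k * T₀)..((k + 1 : ℕ) * T₀), F t := by
      rw [intervalIntegral.sum_integral_adjacent_intervals (a := fun k : ℕ ↦ k * T₀)
        fun k _ ↦ hF.intervalIntegrable _ _]
      simp
    _ ≤ N * B := by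
      refine (Finset.sum_le_card_nsmul _ _ B fun k _ ↦ translate k).trans_eq ?_
      rw [Finset.card_range, nsmul_eq_mul]
    _ ≤ (T / T₀ + 1) * B := by
      gcongr
      exact (Nat.ceil_lt_add_one (by positivity)).le

lemma FourthMomentBound.exists_integral_le {α θ : ℝ} (h : FourthMomentBound α θ) {R : ℝ}
    (hR : 1 ≤ R) : ∃ C > 0, ∀ Z : ℝ, 1 ≤ Z → ∀ (s : Finset ℕ) (a : ℕ → ℂ) (A : ℝ), 0 ≤ A →
      (∀ n ∈ s, (n : ℝ) ∈ Set.Icc (Z / R) Z) → (∀ n ∈ s, ‖a n‖ ≤ A) → ∀ T : ℝ, 0 ≤ T →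
      ∫ t in (0 : ℝ)..T, ‖expSum s a (fun n ↦ ((n : ℝ) / Z) ^ α) t‖ ^ 4 ≤
        (T / Z ^ 2 + 1) * (C * A ^ 4 * Z ^ (4 + θ)) := by
  obtain ⟨C, hC, hbound⟩ := h R hR
  refine ⟨C, hC, fun Z hZ s a A hA hs ha T hT ↦ ?_⟩
  set μ : ℕ → ℝ := fun n ↦ ((n : ℝ) / Z) ^ α
  refine integral_le_of_forall_integral_translate_le (by fun_prop) (fun t ↦ by positivity)
    (by positivity) hT fun k ↦ ?_
  set b : ℕ → ℂ := fun n ↦ a n * e (k * Z ^ 2 * μ n) / A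
  have norm_b : ∀ n ∈ s, ‖b n‖ ≤ 1 := fun n hn ↦ by
    rw [norm_div, norm_mul, norm_e, mul_one, Complex.norm_real, Real.norm_of_nonneg hA]
    exact div_le_one_of_le₀ (ha n hn) hA
  have normalize (t : ℝ) : ‖expSum s a μ (t + k * Z ^ 2)‖ ^ 4 = A ^ 4 * ‖expSum s b μ t‖ ^ 4 := by
    have hb : ∀ n ∈ s, a n * e (k * Z ^ 2 * μ n) = A * b n := fun n hn ↦ by
      refine (mul_div_cancel_of_imp' fun hA₀ ↦ ?_).symm
      have ha₀ : ‖a n‖ ≤ 0 := (ha n hn).trans_eq (by exact_mod_cast hA₀)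
      rw [norm_le_zero_iff.1 ha₀, zero_mul]
    rw [expSum_add, ← Real.norm_of_nonneg hA, ← Complex.norm_real, ← mul_pow, ← norm_mul,
      ← expSum_const_mul, expSum, expSum]
    congr 2
    exact Finset.sum_congr rfl fun n hn ↦ by rw [hb n hn]
  simp only [normalize]
  rw [intervalIntegral.integral_const_mul]
  calc A ^ 4 * ∫ t in (0 : ℝ)..Z ^ 2, ‖expSum s b μ t‖ ^ 4 ≤ A ^ 4 * (C * Z ^ (4 + θ)) := by
        gcongr
        exact hbound Z hZ s b hs norm_b
    _ = C * A ^ 4 * Z ^ (4 + θ) := by ring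

section IntegrationByParts

variable {P P' G G' : ℝ → ℝ} {a b : ℝ}
  (hP : ∀ x ∈ Set.uIcc a b, HasDerivAt P (P' x) x)
  (hG : ∀ x ∈ Set.uIcc a b, HasDerivAt G (G' x) x)
  (hP' : ContinuousOn P' (Set.uIcc a b)) (hG' : ContinuousOn G' (Set.uIcc a b))

include hP hG hP' hG'

lemma two_pi_I_mul_integral_mul_deriv_mul_e :
    2 * Real.pi * Complex.I * ∫ x in a..b, ((P x * G' x : ℝ) : ℂ) * e (G x) =
      P b * e (G b) - P a * e (G a) - ∫ x in a..b, (P' x : ℂ) * e (G x) := by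
  have cont_eG : ContinuousOn (fun x ↦ e (G x)) (Set.uIcc a b) :=
    continuous_e.comp_continuousOn fun x hx ↦ (hG x hx).continuousAt.continuousWithinAt
  rw [← intervalIntegral.integral_mul_deriv_eq_deriv_mul
      (fun x hx ↦ (hP x hx).ofReal_comp) (fun x hx ↦ hasDerivAt_e_comp (hG x hx))
      (Complex.continuous_ofReal.comp_continuousOn hP').intervalIntegrable
      ((continuousOn_const.mul (Complex.continuous_ofReal.comp_continuousOn hG')).mul
        cont_eG).intervalIntegrable,
    ← intervalIntegral.integral_const_mul]
  refine intervalIntegral.integral_congr fun x _ ↦ ?_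
  push_cast
  ring

lemma norm_integral_mul_deriv_mul_e_le :
    ‖∫ x in a..b, ((P x * G' x : ℝ) : ℂ) * e (G x)‖ ≤
      |P b| + |P a| + ‖∫ x in a..b, (P' x : ℂ) * e (G x)‖ := by
  set I := ∫ x in a..b, ((P x * G' x : ℝ) : ℂ) * e (G x)
  have one_le : 1 ≤ ‖(2 * Real.pi * Complex.I : ℂ)‖ := by
    simp only [norm_mul, Complex.norm_ofNat, Complex.norm_real, Complex.norm_I, mul_one,
      Real.norm_of_nonneg Real.pi_pos.le]
    linarith [Real.pi_gt_three]
  calc ‖I‖ ≤ ‖(2 * Real.pi * Complex.I : ℂ)‖ * ‖I‖ :=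
        le_mul_of_one_le_left (norm_nonneg _) one_le
    _ = ‖P b * e (G b) - P a * e (G a) - ∫ x in a..b, (P' x : ℂ) * e (G x)‖ := by
      rw [← norm_mul, two_pi_I_mul_integral_mul_deriv_mul_e hP hG hP' hG']
    _ ≤ |P b| + |P a| + ‖∫ x in a..b, (P' x : ℂ) * e (G x)‖ := by
      refine (norm_sub_le _ _).trans (add_le_add_left ((norm_sub_le _ _).trans_eq ?_) _)
      simp only [norm_mul, norm_e, mul_one, Complex.norm_real, Real.norm_eq_abs]

end IntegrationByParts

section FirstDerivativeTest

variable {P P' g g' g'' : ℝ → ℝ} {a b Y : ℝ}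

lemma mul_norm_integral_mul_e_le (hY : 0 ≤ Y)
    (hP : ∀ x ∈ Set.uIcc a b, HasDerivAt P (P' x) x)
    (hg : ∀ x ∈ Set.uIcc a b, HasDerivAt g (g' x) x)
    (hg' : ∀ x ∈ Set.uIcc a b, HasDerivAt g' (g'' x) x)
    (hP' : ContinuousOn P' (Set.uIcc a b)) (hg'' : ContinuousOn g'' (Set.uIcc a b))
    (hne : ∀ x ∈ Set.uIcc a b, g' x ≠ 0) :
    Y * ‖∫ x in a..b, (P x : ℂ) * e (Y * g x)‖ ≤ |P b / g' b| + |P a / g' a| +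
      ‖∫ x in a..b, (((P' x * g' x - P x * g'' x) / g' x ^ 2 : ℝ) : ℂ) * e (Y * g x)‖ := by
  have cont_P : ContinuousOn P (Set.uIcc a b) := HasDerivAt.continuousOn hP
  have cont_g' : ContinuousOn g' (Set.uIcc a b) := HasDerivAt.continuousOn hg'
  have factor : ∫ x in a..b, (((P / g') x * (Y * g' x) : ℝ) : ℂ) * e (Y * g x) =
      Y * ∫ x in a..b, (P x : ℂ) * e (Y * g x) := by
    rw [← intervalIntegral.integral_const_mul]
    refine intervalIntegral.integral_congr fun x hx ↦ ?_
    have cancel : P x / g' x * (Y * g' x) = Y * P x := by field_simp [hne x hx]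
    simp only [Pi.div_apply, cancel, Complex.ofReal_mul, mul_assoc]
  have h := norm_integral_mul_deriv_mul_e_le (fun x hx ↦ (hP x hx).div (hg' x hx) (hne x hx))
    (fun x hx ↦ (hg x hx).const_mul Y)
    (((hP'.mul cont_g').sub (cont_P.mul hg'')).div (cont_g'.pow 2)
      fun x hx ↦ pow_ne_zero 2 (hne x hx))
    (cont_g'.const_smul Y)
  rwa [factor, norm_mul, Complex.norm_real, Real.norm_of_nonneg hY] at h

end FirstDerivativeTest

section StationaryPhase

lemma abs_deriv_quotient_le {p p' q q' y R k K B : ℝ} (hk : 0 < k) (hy : 0 < y) (hyR : y ≤ R)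
    (hq : k * y ≤ |q|) (hq' : |q'| ≤ K) (hp : |p| ≤ B) (hp' : |p'| ≤ B) :
    |(p' * q - p * q') / q ^ 2| ≤ (R / k + K / k ^ 2) * B * (y ^ 2)⁻¹ := by
  have hB : 0 ≤ B := (abs_nonneg _).trans hp
  have hK : 0 ≤ K := (abs_nonneg _).trans hq'
  have hq_pos : 0 < |q| := (mul_pos hk hy).trans_le hq
  have split : (p' * q - p * q') / q ^ 2 = p' / q - p * q' / q ^ 2 := by
    field_simp [abs_pos.1 hq_pos]
  calc |(p' * q - p * q') / q ^ 2| ≤ |p'| / |q| + |p| * |q'| / |q| ^ 2 := by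
        rw [split, ← abs_div, ← abs_mul, ← abs_pow, ← abs_div]
        exact abs_sub _ _
    _ ≤ B / (k * y) + B * K / (k * y) ^ 2 := by gcongr
    _ = (y / k + K / k ^ 2) * B * (y ^ 2)⁻¹ := by field_simp
    _ ≤ (R / k + K / k ^ 2) * B * (y ^ 2)⁻¹ := by gcongr

lemma norm_integral_le_mul_inv_of_norm_le {f : ℝ → ℂ} {δ R M : ℝ} (hδ : 0 < δ) (hδR : δ ≤ R)
    (hM : 0 ≤ M) (hf : ∀ y ∈ Set.Icc δ R, ‖f y‖ ≤ M * (y ^ 2)⁻¹) :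
    ‖∫ y in δ..R, f y‖ ≤ M * δ⁻¹ := by
  have pos : ∀ y ∈ Set.uIcc δ R, 0 < y := fun y hy ↦
    hδ.trans_le ((Set.uIcc_of_le hδR ▸ hy).1)
  have integrable : IntervalIntegrable (fun y : ℝ ↦ (y ^ 2)⁻¹) volume δ R :=
    ((continuousOn_id.pow 2).inv₀ fun y hy ↦ pow_ne_zero 2 (pos y hy).ne').intervalIntegrable
  have hderiv : ∀ y ∈ Set.uIcc δ R, HasDerivAt (fun y : ℝ ↦ -y⁻¹) (y ^ 2)⁻¹ y := fun y hy ↦ by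
    simpa using (hasDerivAt_inv (pos y hy).ne').fun_neg
  calc ‖∫ y in δ..R, f y‖ ≤ ∫ y in δ..R, M * (y ^ 2)⁻¹ :=
        intervalIntegral.norm_integral_le_of_norm_le hδR
          (.of_forall fun y hy ↦ hf y (Set.Ioc_subset_Icc_self hy)) (integrable.const_mul M)
    _ = M * (δ⁻¹ - R⁻¹) := by
      rw [intervalIntegral.integral_const_mul,
        intervalIntegral.integral_eq_sub_of_hasDerivAt hderiv integrable]
      ring
    _ ≤ M * δ⁻¹ := by
      gcongr
      linarith [inv_nonneg.2 (hδ.le.trans hδR)]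

variable {ψ b : ℝ → ℝ} {R k K B Y δ : ℝ}

lemma norm_integral_mul_e_le_of_mul_le_abs_deriv (hk : 0 < k) (hY : 0 < Y) (hδ : 0 < δ)
    (hδR : δ ≤ R) (hψ : ContDiff ℝ 2 ψ) (hb : ContDiff ℝ 1 b)
    (hψ' : ∀ y ∈ Set.Icc δ R, k * y ≤ |deriv ψ y|)
    (hψ'' : ∀ y ∈ Set.Icc δ R, |deriv (deriv ψ) y| ≤ K)
    (hbB : ∀ y ∈ Set.Icc δ R, |b y| ≤ B) (hb'B : ∀ y ∈ Set.Icc δ R, |deriv b y| ≤ B) :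
    ‖∫ y in δ..R, (b y : ℂ) * e (Y * ψ y)‖ ≤ (2 / k + R / k + K / k ^ 2) * B / (Y * δ) := by
  have hψ₁ : ContDiff ℝ 1 (deriv ψ) := hψ.deriv'
  have hR : 0 < R := hδ.trans_le hδR
  have hB : 0 ≤ B := (abs_nonneg _).trans (hbB δ ⟨le_rfl, hδR⟩)
  have hK : 0 ≤ K := (abs_nonneg _).trans (hψ'' δ ⟨le_rfl, hδR⟩)
  have deriv_ψ_ne : ∀ y ∈ Set.uIcc δ R, deriv ψ y ≠ 0 := fun y hy ↦ by
    rw [Set.uIcc_of_le hδR] at hy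
    exact abs_pos.1 ((mul_pos hk (hδ.trans_le hy.1)).trans_le (hψ' y hy))
  have endpoint : ∀ y ∈ Set.Icc δ R, |b y / deriv ψ y| ≤ B / (k * δ) := fun y hy ↦ by
    rw [abs_div]
    gcongr
    · exact hbB y hy
    · exact (mul_le_mul_of_nonneg_left hy.1 hk.le).trans (hψ' y hy)
  set M := (R / k + K / k ^ 2) * B
  have remainder : ‖∫ y in δ..R, (((deriv b y * deriv ψ y - b y * deriv (deriv ψ) y) /
      deriv ψ y ^ 2 : ℝ) : ℂ) * e (Y * ψ y)‖ ≤ M * δ⁻¹ := by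
    refine norm_integral_le_mul_inv_of_norm_le hδ hδR (by positivity) fun y hy ↦ ?_
    rw [norm_mul, norm_e, mul_one, Complex.norm_real]
    exact abs_deriv_quotient_le hk (hδ.trans_le hy.1) hy.2 (hψ' y hy) (hψ'' y hy) (hbB y hy)
      (hb'B y hy)
  have key := mul_norm_integral_mul_e_le (a := δ) (b := R) hY.le
    (fun y _ ↦ (hb.differentiable_one y).hasDerivAt)
    (fun y _ ↦ (hψ.differentiable two_ne_zero y).hasDerivAt)
    (fun y _ ↦ (hψ₁.differentiable_one y).hasDerivAt)
    hb.continuous_deriv_one.continuousOn hψ₁.continuous_deriv_one.continuousOn deriv_ψ_ne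
  rw [le_div_iff₀ (by positivity)]
  calc ‖∫ y in δ..R, (b y : ℂ) * e (Y * ψ y)‖ * (Y * δ)
    _ = Y * ‖∫ y in δ..R, (b y : ℂ) * e (Y * ψ y)‖ * δ := by ring
    _ ≤ (B / (k * δ) + B / (k * δ) + M * δ⁻¹) * δ := by
      gcongr
      exact key.trans (add_le_add (add_le_add (endpoint R ⟨hδR, le_rfl⟩)
        (endpoint δ ⟨le_rfl, hδR⟩)) remainder)
    _ = (2 / k + R / k + K / k ^ 2) * B := by
      simp only [M]
      field_simp
      ring

lemma norm_integral_mul_e_le_of_abs_le {f : ℝ → ℝ} {r : ℝ} (hr : 0 ≤ r)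
    (hbB : ∀ y ∈ Set.Icc (-r) r, |b y| ≤ B) :
    ‖∫ y in -r..r, (b y : ℂ) * e (f y)‖ ≤ 2 * r * B := by
  have h := intervalIntegral.norm_integral_le_of_norm_le_const (a := -r) (b := r)
    (f := fun y ↦ (b y : ℂ) * e (f y)) (C := B) fun y hy ↦ by
      rw [Set.uIoc_of_le (by linarith)] at hy
      rw [norm_mul, norm_e, mul_one, Complex.norm_real]
      exact hbB y (Set.Ioc_subset_Icc_self hy)
  rw [abs_of_nonneg (by linarith)] at h
  linarith

lemma norm_integral_mul_e_le_of_mul_abs_le_abs_deriv (hk : 0 < k) (hY : 0 < Y) (hδ : 0 < δ)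
    (hδR : δ ≤ R) (hψ : ContDiff ℝ 2 ψ) (hb : ContDiff ℝ 1 b)
    (hψ' : ∀ y ∈ Set.Icc (-R) R, k * |y| ≤ |deriv ψ y|)
    (hψ'' : ∀ y ∈ Set.Icc (-R) R, |deriv (deriv ψ) y| ≤ K)
    (hbB : ∀ y ∈ Set.Icc (-R) R, |b y| ≤ B) (hb'B : ∀ y ∈ Set.Icc (-R) R, |deriv b y| ≤ B) :
    ‖∫ y in -R..R, (b y : ℂ) * e (Y * ψ y)‖ ≤
      2 * δ * B + 2 * ((2 / k + R / k + K / k ^ 2) * B / (Y * δ)) := by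
  have mem {y : ℝ} (hy : y ∈ Set.Icc δ R) : y ∈ Set.Icc (-R) R := ⟨by linarith [hy.1], hy.2⟩
  have mem_neg {y : ℝ} (hy : y ∈ Set.Icc δ R) : -y ∈ Set.Icc (-R) R :=
    ⟨by linarith [hy.2], by linarith [hy.1]⟩
  have abs_eq {y : ℝ} (hy : y ∈ Set.Icc δ R) : |y| = y := abs_of_pos (hδ.trans_le hy.1)
  have right := norm_integral_mul_e_le_of_mul_le_abs_deriv hk hY hδ hδR hψ hb
    (fun y hy ↦ by simpa only [abs_eq hy] using hψ' y (mem hy)) (fun y hy ↦ hψ'' y (mem hy))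
    (fun y hy ↦ hbB y (mem hy)) (fun y hy ↦ hb'B y (mem hy))
  have left := norm_integral_mul_e_le_of_mul_le_abs_deriv (ψ := fun y ↦ ψ (-y))
    (b := fun y ↦ b (-y)) (K := K) (B := B) hk hY hδ hδR (by fun_prop) (by fun_prop)
    (fun y hy ↦ by simpa [deriv_comp_neg, abs_eq hy] using hψ' (-y) (mem_neg hy))
    (fun y hy ↦ by
      have h : deriv (fun y ↦ ψ (-y)) = fun y ↦ -deriv ψ (-y) := funext (deriv_comp_neg ψ)
      simpa [h, deriv.fun_neg, deriv_comp_neg] using hψ'' (-y) (mem_neg hy))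
    (fun y hy ↦ hbB (-y) (mem_neg hy))
    (fun y hy ↦ by simpa [deriv_comp_neg] using hb'B (-y) (mem_neg hy))
  rw [intervalIntegral.integral_comp_neg fun y ↦ (b y : ℂ) * e (Y * ψ y)] at left
  have middle : ‖∫ y in -δ..δ, (b y : ℂ) * e (Y * ψ y)‖ ≤ 2 * δ * B :=
    norm_integral_mul_e_le_of_abs_le hδ.le fun y hy ↦
      hbB y ⟨by linarith [hy.1], by linarith [hy.2]⟩
  have cont : Continuous fun y ↦ (b y : ℂ) * e (Y * ψ y) := by
    have := hψ.continuous
    have := hb.continuous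
    fun_prop
  rw [← intervalIntegral.integral_add_adjacent_intervals (cont.intervalIntegrable _ (-δ))
      (cont.intervalIntegrable _ _),
    ← intervalIntegral.integral_add_adjacent_intervals (cont.intervalIntegrable (-δ) δ)
      (cont.intervalIntegrable _ _)]
  rw [← add_assoc]
  exact norm_add₃_le.trans (by linarith)

lemma exists_norm_integral_mul_e_le_div_sqrt (hk : 0 < k) (hR : 0 < R) (hψ : ContDiff ℝ 2 ψ)
    (hψ' : ∀ y ∈ Set.Icc (-R) R, k * |y| ≤ |deriv ψ y|) :
    ∃ C > 0, ∀ (b : ℝ → ℝ) (B Y : ℝ), 0 < Y → ContDiff ℝ 1 b →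
      (∀ y ∈ Set.Icc (-R) R, |b y| ≤ B) → (∀ y ∈ Set.Icc (-R) R, |deriv b y| ≤ B) →
      ‖∫ y in -R..R, (b y : ℂ) * e (Y * ψ y)‖ ≤ C * B / √Y := by
  have hψ₁ : ContDiff ℝ 1 (deriv ψ) := hψ.deriv'
  obtain ⟨K, hK⟩ := (isCompact_Icc (a := -R) (b := R)).exists_bound_of_continuousOn
    hψ₁.continuous_deriv_one.continuousOn
  have hK₀ : 0 ≤ K := (norm_nonneg _).trans (hK 0 ⟨by linarith, hR.le⟩)
  set L := 2 / k + R / k + K / k ^ 2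
  refine ⟨2 + 2 * L, by positivity, fun b B Y hY hb hbB hb'B ↦ ?_⟩
  have hB : 0 ≤ B := (abs_nonneg _).trans (hbB 0 ⟨by linarith, hR.le⟩)
  have : 0 < √Y := Real.sqrt_pos.2 hY
  rcases le_total R (1 / √Y) with h | h
  · calc ‖∫ y in -R..R, (b y : ℂ) * e (Y * ψ y)‖ ≤ 2 * R * B :=
          norm_integral_mul_e_le_of_abs_le hR.le hbB
      _ ≤ (2 + 2 * L) * (1 / √Y) * B := by
          gcongr
          linarith [show 0 ≤ L by positivity]
      _ = (2 + 2 * L) * B / √Y := by ring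
  · refine (norm_integral_mul_e_le_of_mul_abs_le_abs_deriv hk hY (by positivity) h hψ hb hψ' hK
      hbB hb'B).trans_eq ?_
    have hYδ : Y * (1 / √Y) = √Y := by rw [mul_one_div, Real.div_sqrt]
    rw [hYδ]
    ring

end StationaryPhase

section NonstationaryPhase

lemma norm_integral_mul_e_le_div_sq {P P' Q' g g' g'' : ℝ → ℝ} {a b K Y : ℝ} (hY : 0 < Y)
    (hP : ∀ x ∈ Set.uIcc a b, HasDerivAt P (P' x) x)
    (hg : ∀ x ∈ Set.uIcc a b, HasDerivAt g (g' x) x)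
    (hg' : ∀ x ∈ Set.uIcc a b, HasDerivAt g' (g'' x) x)
    (hQ : ∀ x ∈ Set.uIcc a b,
      HasDerivAt (fun x ↦ (P' x * g' x - P x * g'' x) / g' x ^ 2) (Q' x) x)
    (hP' : ContinuousOn P' (Set.uIcc a b)) (hg'' : ContinuousOn g'' (Set.uIcc a b))
    (hQ' : ContinuousOn Q' (Set.uIcc a b)) (hne : ∀ x ∈ Set.uIcc a b, g' x ≠ 0)
    (hPa : P a = 0) (hPb : P b = 0) (hP'a : P' a = 0) (hP'b : P' b = 0)
    (hK : ∀ x ∈ Set.uIcc a b,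
      |(Q' x * g' x - (P' x * g' x - P x * g'' x) / g' x ^ 2 * g'' x) / g' x ^ 2| ≤ K) :
    ‖∫ x in a..b, (P x : ℂ) * e (Y * g x)‖ ≤ K * |b - a| / Y ^ 2 := by
  have first := mul_norm_integral_mul_e_le hY.le hP hg hg' hP' hg'' hne
  have second := mul_norm_integral_mul_e_le hY.le hQ hg hg' hQ' hg'' hne
  have third := intervalIntegral.norm_integral_le_of_norm_le_const
    (f := fun x ↦ (((Q' x * g' x - (P' x * g' x - P x * g'' x) / g' x ^ 2 * g'' x) / g' x ^ 2 :
      ℝ) : ℂ) * e (Y * g x)) (a := a) (b := b) (C := K) fun x hx ↦ by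
    simpa only [norm_mul, norm_e, mul_one, Complex.norm_real, Real.norm_eq_abs]
      using hK x (Set.uIoc_subset_uIcc hx)
  simp only [hPa, hPb, hP'a, hP'b, zero_mul, sub_zero, zero_div, abs_zero, zero_add]
    at first second
  rw [le_div_iff₀ (by positivity)]
  nlinarith

variable {E : Type*} [TopologicalSpace E] {A : Set E} {g g₁ g₂ g₃ : E → ℝ → ℝ} {V : ℝ → ℝ}
  {a b : ℝ}

lemma exists_norm_integral_mul_e_le_div_sq (hA : IsCompact A)
    (hg : ∀ p x, HasDerivAt (g p) (g₁ p x) x) (hg₁ : ∀ p x, HasDerivAt (g₁ p) (g₂ p x) x)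
    (hg₂ : ∀ p x, HasDerivAt (g₂ p) (g₃ p x) x) (cont_g₁ : Continuous ↿g₁)
    (cont_g₂ : Continuous ↿g₂) (cont_g₃ : Continuous ↿g₃)
    (hne : ∀ p ∈ A, ∀ x ∈ Set.uIcc a b, g₁ p x ≠ 0) (hV : ContDiff ℝ 2 V)
    (hVa : V a = 0) (hVb : V b = 0) (hV'a : deriv V a = 0) (hV'b : deriv V b = 0) :
    ∃ K > 0, ∀ p ∈ A, ∀ Y > 0, ‖∫ x in a..b, (V x : ℂ) * e (Y * g p x)‖ ≤ K / Y ^ 2 := by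
  have hV₁ : ContDiff ℝ 1 (deriv V) := hV.deriv'
  have : Continuous V := hV.continuous
  have cont_V₁ : Continuous (deriv V) := hV₁.continuous
  have : Continuous (deriv (deriv V)) := hV₁.continuous_deriv_one
  have dV (x : ℝ) : HasDerivAt V (deriv V x) x := (hV.differentiable two_ne_zero x).hasDerivAt
  have dV₁ (x : ℝ) : HasDerivAt (deriv V) (deriv (deriv V) x) x :=
    (hV₁.differentiable_one x).hasDerivAt
  let Q : E → ℝ → ℝ := fun p x ↦ (deriv V x * g₁ p x - V x * g₂ p x) / g₁ p x ^ 2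
  let Q' : E → ℝ → ℝ := fun p x ↦ ((deriv (deriv V) x * g₁ p x - V x * g₃ p x) * g₁ p x ^ 2 -
    (deriv V x * g₁ p x - V x * g₂ p x) * (2 * g₁ p x * g₂ p x)) / (g₁ p x ^ 2) ^ 2
  have dQ : ∀ p ∈ A, ∀ x ∈ Set.uIcc a b, HasDerivAt (Q p) (Q' p x) x := fun p hp x hx ↦
    ((((dV₁ x).mul (hg₁ p x)).sub ((dV x).mul (hg₂ p x))).div ((hg₁ p x).pow 2)
      (pow_ne_zero 2 (hne p hp x hx))).congr_deriv (by
        simp only [Q', Pi.mul_apply, Pi.sub_apply, Pi.pow_apply, Nat.cast_ofNat]; ring)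
  have : Continuous fun z : E × ℝ ↦ g₁ z.1 z.2 := cont_g₁
  have : Continuous fun z : E × ℝ ↦ g₂ z.1 z.2 := cont_g₂
  have : Continuous fun z : E × ℝ ↦ g₃ z.1 z.2 := cont_g₃
  have g₁_sq_ne : ∀ z ∈ A ×ˢ Set.uIcc a b, g₁ z.1 z.2 ^ 2 ≠ 0 := fun z hz ↦
    pow_ne_zero 2 (hne _ hz.1 _ hz.2)
  have cont_Q : ContinuousOn (fun z : E × ℝ ↦ Q z.1 z.2) (A ×ˢ Set.uIcc a b) :=
    ContinuousOn.div (by fun_prop) (by fun_prop) g₁_sq_ne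
  have cont_Q' : ContinuousOn (fun z : E × ℝ ↦ Q' z.1 z.2) (A ×ˢ Set.uIcc a b) :=
    ContinuousOn.div (by fun_prop) (by fun_prop) fun z hz ↦ pow_ne_zero 2 (g₁_sq_ne z hz)
  have cont_R : ContinuousOn
      (fun z : E × ℝ ↦ (Q' z.1 z.2 * g₁ z.1 z.2 - Q z.1 z.2 * g₂ z.1 z.2) / g₁ z.1 z.2 ^ 2)
      (A ×ˢ Set.uIcc a b) :=
    ContinuousOn.div (by fun_prop) (by fun_prop) g₁_sq_ne
  obtain ⟨K, hK⟩ := (hA.prod isCompact_uIcc).exists_bound_of_continuousOn cont_R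
  refine ⟨|K| * |b - a| + 1, by positivity, fun p hp Y hY ↦ ?_⟩
  have cont_Q'p : ContinuousOn (Q' p) (Set.uIcc a b) :=
    ContinuousOn.uncurry_left p hp cont_Q'
  calc ‖∫ x in a..b, (V x : ℂ) * e (Y * g p x)‖ ≤ |K| * |b - a| / Y ^ 2 :=
        norm_integral_mul_e_le_div_sq hY (fun x _ ↦ dV x) (fun x _ ↦ hg p x)
          (fun x _ ↦ hg₁ p x) (dQ p hp) cont_V₁.continuousOn (cont_g₂.uncurry_left p).continuousOn
          cont_Q'p (hne p hp) hVa hVb hV'a hV'b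
          fun x hx ↦ (hK (p, x) ⟨hp, hx⟩).trans (le_abs_self K)
    _ ≤ (|K| * |b - a| + 1) / Y ^ 2 := by gcongr; linarith

end NonstationaryPhase

section AnalyticQuotient

variable {𝕜 : Type*} [NontriviallyNormedField 𝕜]

lemma analyticAt_dslope {E : Type*} [NormedAddCommGroup E] [NormedSpace 𝕜 E] {f : 𝕜 → E}
    {a x : 𝕜} (ha : AnalyticAt 𝕜 f a) (hx : AnalyticAt 𝕜 f x) : AnalyticAt 𝕜 (dslope f a) x := by
  rcases eq_or_ne x a with rfl | hne
  · obtain ⟨p, hp⟩ := ha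
    exact ⟨_, hp.has_fpower_series_dslope_fslope⟩
  · have slope_analytic : AnalyticAt 𝕜 (fun y ↦ (y - a)⁻¹ • (f y - f a)) x :=
      ((analyticAt_id.sub analyticAt_const).inv (sub_ne_zero.2 hne)).smul
        (hx.sub analyticAt_const)
    exact slope_analytic.congr (dslope_eventuallyEq_slope_of_ne f hne).symm

lemma exists_analyticAt_eq_mul {f g : 𝕜 → 𝕜} {a : 𝕜} (hf : ∀ x, AnalyticAt 𝕜 f x)
    (hg : ∀ x, AnalyticAt 𝕜 g x) (hfa : f a = 0) (hga : g a = 0) (hg'a : deriv g a ≠ 0)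
    (hne : ∀ x ≠ a, g x ≠ 0) :
    ∃ q : 𝕜 → 𝕜, (∀ x, AnalyticAt 𝕜 q x) ∧ ∀ x, f x = q x * g x := by
  have hf_mul (x : 𝕜) : (x - a) * dslope f a x = f x := sub_smul_dslope_of_zero hfa x
  have hg_mul (x : 𝕜) : (x - a) * dslope g a x = g x := sub_smul_dslope_of_zero hga x
  have dslope_ne (x : 𝕜) : dslope g a x ≠ 0 := by
    rcases eq_or_ne x a with rfl | hx
    · rwa [dslope_same]
    · exact right_ne_zero_of_mul (hg_mul x ▸ hne x hx)
  refine ⟨fun x ↦ dslope f a x / dslope g a x, fun x ↦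
    (analyticAt_dslope (hf a) (hf x)).div (analyticAt_dslope (hg a) (hg x)) (dslope_ne x),
    fun x ↦ ?_⟩
  rw [← hf_mul, ← hg_mul, mul_left_comm, div_mul_cancel₀ _ (dslope_ne x)]

end AnalyticQuotient

/-- The phase `t * exp (c * x) - y * exp x` has its critical point at an `x₀` with
`y * exp x₀ = c * t * exp (c * x₀)`. Translated and normalised to vanish at that point, it
becomes a multiple of `phaseExcess c`. -/
noncomputable def phaseExcess (c x : ℝ) : ℝ := Real.exp (c * x) - c * Real.exp x + (c - 1)

section PhaseExcess

variable {c : ℝ}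

@[fun_prop]
lemma analyticAt_phaseExcess (c x : ℝ) : AnalyticAt ℝ (phaseExcess c) x := by
  unfold phaseExcess
  fun_prop

@[fun_prop]
lemma contDiff_phaseExcess {n : WithTop ℕ∞} (c : ℝ) : ContDiff ℝ n (phaseExcess c) := by
  unfold phaseExcess
  fun_prop

@[fun_prop]
lemma continuous_phaseExcess (c : ℝ) : Continuous (phaseExcess c) :=
  (contDiff_phaseExcess (n := 0) c).continuous

lemma deriv_phaseExcess (c x : ℝ) :
    deriv (phaseExcess c) x = c * Real.exp x * (Real.exp ((c - 1) * x) - 1) := by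
  have h : HasDerivAt (phaseExcess c) (Real.exp (c * x) * c - c * Real.exp x) x :=
    ((hasDerivAt_const_mul c).exp.sub ((Real.hasDerivAt_exp x).const_mul c)).add_const (c - 1)
  have exp_eq : Real.exp (c * x) = Real.exp x * Real.exp ((c - 1) * x) := by
    rw [← Real.exp_add]; ring_nf
  rw [h.deriv, exp_eq]
  ring

lemma exp_neg_mul_abs_le_abs_exp_sub_one {x r : ℝ} (hx : |x| ≤ r) :
    Real.exp (-r) * |x| ≤ |Real.exp x - 1| := by
  rcases le_total 0 x with h | h
  · rw [abs_of_nonneg h] at hx ⊢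
    calc Real.exp (-r) * x ≤ 1 * x := by gcongr; exact Real.exp_le_one_iff.2 (by linarith)
      _ ≤ Real.exp x - 1 := by linarith [Real.add_one_le_exp x]
      _ ≤ |Real.exp x - 1| := le_abs_self _
  · rw [abs_of_nonpos h] at hx ⊢
    calc Real.exp (-r) * -x ≤ Real.exp x * (Real.exp (-x) - 1) := by
          gcongr <;> linarith [Real.add_one_le_exp (-x)]
      _ = -(Real.exp x - 1) := by rw [mul_sub, ← Real.exp_add, add_neg_cancel, Real.exp_zero]; ring
      _ ≤ |Real.exp x - 1| := neg_le_abs _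

lemma exists_mul_abs_le_abs_deriv_phaseExcess (hc : 1 < c) (N : ℝ) :
    ∃ k > 0, ∀ x ∈ Set.Icc (-N) N, k * |x| ≤ |deriv (phaseExcess c) x| := by
  have hc₁ : 0 < c - 1 := sub_pos.2 hc
  refine ⟨c * Real.exp (-N) * (Real.exp (-((c - 1) * N)) * (c - 1)), by positivity,
    fun x hx ↦ ?_⟩
  have abs_le : |(c - 1) * x| ≤ (c - 1) * N := by
    rw [abs_mul, abs_of_pos hc₁]
    gcongr
    exact abs_le.2 hx
  calc c * Real.exp (-N) * (Real.exp (-((c - 1) * N)) * (c - 1)) * |x|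
      = c * Real.exp (-N) * (Real.exp (-((c - 1) * N)) * |(c - 1) * x|) := by
        rw [abs_mul, abs_of_pos hc₁]; ring
    _ ≤ c * Real.exp x * |Real.exp ((c - 1) * x) - 1| := by
        gcongr
        · exact hx.1
        · exact exp_neg_mul_abs_le_abs_exp_sub_one abs_le
    _ = |deriv (phaseExcess c) x| := by
        rw [deriv_phaseExcess, abs_mul, abs_of_pos (by positivity : 0 < c * Real.exp x)]

lemma exists_contDiff_phaseExcess_eq_mul_deriv (hc : 1 < c) :
    ∃ q : ℝ → ℝ, ContDiff ℝ 2 q ∧ ∀ x, phaseExcess c x = q x * deriv (phaseExcess c) x := by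
  have hc₁ : 0 < c - 1 := sub_pos.2 hc
  have deriv_zero : deriv (phaseExcess c) 0 = 0 := by simp [deriv_phaseExcess]
  have deriv_deriv_zero : deriv (deriv (phaseExcess c)) 0 = c * (c - 1) := by
    have h : HasDerivAt (fun x ↦ c * Real.exp x * (Real.exp ((c - 1) * x) - 1)) _ 0 :=
      ((Real.hasDerivAt_exp 0).const_mul c).mul ((hasDerivAt_const_mul (c - 1)).exp.sub_const 1)
    rw [funext (deriv_phaseExcess c), h.deriv]
    simp
  obtain ⟨q, hq, q_mul⟩ := exists_analyticAt_eq_mul (analyticAt_phaseExcess c)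
    (fun x ↦ (analyticAt_phaseExcess c x).deriv) (a := 0) (by simp [phaseExcess]) deriv_zero
    (by rw [deriv_deriv_zero]; positivity)
    (fun x hx ↦ by
      rw [deriv_phaseExcess]
      refine mul_ne_zero (by positivity) (sub_ne_zero.2 ?_)
      rw [Ne, Real.exp_eq_one_iff]
      exact mul_ne_zero hc₁.ne' hx)
  exact ⟨q, contDiff_iff_contDiffAt.2 fun x ↦ (hq x).contDiffAt, q_mul⟩

lemma mul_exp_sub_mul_exp_eq_phaseExcess {t y x₀ : ℝ} (hc : c ≠ 0)
    (h : y * Real.exp x₀ = c * (t * Real.exp (c * x₀))) (x : ℝ) :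
    t * Real.exp (c * x) - y * Real.exp x =
      y / c * Real.exp x₀ * phaseExcess c (x - x₀) - (c - 1) * (y / c * Real.exp x₀) := by
  have critical_value : y / c * Real.exp x₀ = t * Real.exp (c * x₀) := by
    rw [div_mul_eq_mul_div, h, mul_div_cancel_left₀ _ hc]
  have exp_mul_eq : Real.exp (c * x) = Real.exp (c * x₀) * Real.exp (c * (x - x₀)) := by
    rw [← Real.exp_add]; ring_nf
  have exp_eq : Real.exp x = Real.exp x₀ * Real.exp (x - x₀) := by
    rw [← Real.exp_add]; ring_nf
  rw [exp_mul_eq, exp_eq, ← mul_assoc y, h, critical_value, phaseExcess]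
  ring

end PhaseExcess

section StationaryAmplitude

variable {c M : ℝ} {V : ℝ → ℝ}

lemma hasDerivAt_intervalIntegral_of_continuous {F F' : ℝ → ℝ → ℂ} (hF : Continuous ↿F)
    (hF' : Continuous ↿F') (hderiv : ∀ x y, HasDerivAt (F · y) (F' x y) x) (a b x₀ : ℝ) :
    HasDerivAt (fun x ↦ ∫ y in a..b, F x y) (∫ y in a..b, F' x₀ y) x₀ := by
  obtain ⟨C, hC⟩ := ((isCompact_closedBall x₀ 1).prod (isCompact_uIcc (a := a) (b := b))
    ).exists_bound_of_continuousOn hF'.continuousOn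
  exact (intervalIntegral.hasDerivAt_integral_of_dominated_loc_of_deriv_le
    (bound := fun _ ↦ C) (Metric.ball_mem_nhds x₀ one_pos)
    (.of_forall fun x ↦ (hF.uncurry_left x).aestronglyMeasurable)
    ((hF.uncurry_left x₀).intervalIntegrable _ _)
    (hF'.uncurry_left x₀).aestronglyMeasurable
    (.of_forall fun y hy x hx ↦
      hC (x, y) ⟨Metric.ball_subset_closedBall hx, Set.uIoc_subset_uIcc hy⟩)
    intervalIntegrable_const (.of_forall fun y _ x _ ↦ hderiv x y)).2

lemma integral_eq_intervalIntegral_of_support_subset {V : ℝ → ℝ}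
    (hV : Function.support V ⊆ Set.Ioo (-M) M) (f : ℝ → ℂ) :
    ∫ x, (V x : ℂ) * f x = ∫ x in -M..M, (V x : ℂ) * f x := by
  refine (intervalIntegral.integral_eq_integral_of_support_subset fun x hx ↦ ?_).symm
  exact Set.Ioo_subset_Ioc_self
    (hV (Complex.ofReal_ne_zero.1 (left_ne_zero_of_mul (Function.mem_support.1 hx))))

lemma exists_norm_integral_mul_e_phaseExcess_le (hc : 1 < c) (N : ℝ) {F F' : ℝ → ℝ → ℝ}
    (hF : ∀ x z, HasDerivAt (F x) (F' x z) z) (cont_F : Continuous ↿F) (cont_F' : Continuous ↿F')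
    (hsupp : ∀ x, Function.support (F x) ⊆ Set.Ioo (-M) M) :
    ∃ C > 0, ∀ Y > 0, ∀ x, |x| ≤ N →
      ‖∫ z, (F x z : ℂ) * e (Y * phaseExcess c (z - x))‖ ≤ C / √Y := by
  set R := |M| + |N| + 1
  obtain ⟨k, hk, hψ⟩ := exists_mul_abs_le_abs_deriv_phaseExcess hc R
  obtain ⟨C, hC, second_derivative_test⟩ := exists_norm_integral_mul_e_le_div_sqrt hk
    (by positivity : 0 < R) (contDiff_phaseExcess c) hψ
  have box_compact : IsCompact (Set.Icc (-N) N ×ˢ Set.Icc (-R) R) :=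
    isCompact_Icc.prod isCompact_Icc
  have cont_shift : Continuous fun p : ℝ × ℝ ↦ (p.1, p.2 + p.1) := by fun_prop
  obtain ⟨B, hB⟩ := box_compact.exists_bound_of_continuousOn (cont_F.comp cont_shift).continuousOn
  obtain ⟨B', hB'⟩ := box_compact.exists_bound_of_continuousOn
    (cont_F'.comp cont_shift).continuousOn
  refine ⟨C * (|B| + |B'| + 1), by positivity, fun Y hY x hx ↦ ?_⟩
  have hderiv (u : ℝ) : HasDerivAt (fun u ↦ F x (u + x)) (F' x (u + x)) u :=
    (hF x (u + x)).comp_add_const u x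
  have hb : ContDiff ℝ 1 fun u ↦ F x (u + x) := contDiff_one_iff_deriv.2
    ⟨fun u ↦ (hderiv u).differentiableAt, by
      rw [funext fun u ↦ (hderiv u).deriv]
      exact (cont_F'.uncurry_left x).comp (by fun_prop)⟩
  have support_shift : Function.support (fun u ↦ F x (u + x)) ⊆ Set.Ioo (-R) R := fun u hu ↦ by
    have mem_Ioo : u + x ∈ Set.Ioo (-M) M := hsupp x hu
    have x_mem := abs_le.1 hx
    constructor <;> linarith [mem_Ioo.1, mem_Ioo.2, x_mem.1, x_mem.2, le_abs_self M, le_abs_self N]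
  calc ‖∫ z, (F x z : ℂ) * e (Y * phaseExcess c (z - x))‖
      = ‖∫ u in -R..R, (F x (u + x) : ℂ) * e (Y * phaseExcess c u)‖ := by
        rw [← integral_eq_intervalIntegral_of_support_subset support_shift,
          ← integral_add_right_eq_self _ x]
        simp only [add_sub_cancel_right]
    _ ≤ C * (|B| + |B'| + 1) / √Y := second_derivative_test _ _ Y hY hb
        (fun u hu ↦ (hB (x, u) ⟨abs_le.1 hx, hu⟩).trans (by
          linarith [le_abs_self B, abs_nonneg B']))
        (fun u hu ↦ by
          rw [(hderiv u).deriv]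
          exact (hB' (x, u) ⟨abs_le.1 hx, hu⟩).trans (by linarith [le_abs_self B', abs_nonneg B]))

/-- The amplitude left after removing the value of the phase at its critical point `x` from an
oscillatory integral with weight `V` and phase `t * exp (c * z) - y * exp z`, where
`κ = y / c`. -/
noncomputable def stationaryAmplitude (c : ℝ) (V : ℝ → ℝ) (κ x : ℝ) : ℂ :=
  ∫ z, (V z : ℂ) * e (κ * Real.exp x * phaseExcess c (z - x))

/-- The weight which the `x`-derivative of `stationaryAmplitude` has after integration by parts in
`z`. If `phaseExcess c = q * deriv (phaseExcess c)`, then the `x`-derivative of the phase is a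
multiple of its `z`-derivative, which makes this integration by parts possible. -/
noncomputable def derivWeight (V q : ℝ → ℝ) (x z : ℝ) : ℝ :=
  deriv V z * (1 - q (z - x)) - V z * deriv q (z - x)

lemma support_derivWeight_subset (V q : ℝ → ℝ) (x : ℝ) :
    Function.support (derivWeight V q x) ⊆ tsupport V := fun z hz ↦ by
  by_contra hzV
  have deriv_eq_zero : deriv V z = 0 := Function.notMem_support.1 fun h ↦
    hzV (support_deriv_subset h)
  exact hz (by simp only [derivWeight, image_eq_zero_of_notMem_tsupport hzV, deriv_eq_zero,
    zero_mul, sub_zero])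

lemma hasDerivAt_stationaryAmplitude {q : ℝ → ℝ} (hV : ContDiff ℝ 1 V)
    (hsupp : tsupport V ⊆ Set.Ioo (-M) M) (hq : ContDiff ℝ 1 q)
    (hmul : ∀ x, phaseExcess c x = q x * deriv (phaseExcess c) x) (κ x : ℝ) :
    HasDerivAt (stationaryAmplitude c V κ)
      (∫ z, (derivWeight V q x z : ℂ) * e (κ * Real.exp x * phaseExcess c (z - x))) x := by
  have supp_V : Function.support V ⊆ Set.Ioo (-M) M := (subset_tsupport V).trans hsupp
  have : Continuous V := hV.continuous
  have : Continuous q := hq.continuous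
  have : Continuous (deriv V) := hV.continuous_deriv_one
  have : Continuous (deriv q) := hq.continuous_deriv_one
  have : Continuous (deriv (phaseExcess c)) :=
    (contDiff_phaseExcess c).continuous_deriv_one
  have dψ (y : ℝ) : HasDerivAt (phaseExcess c) (deriv (phaseExcess c) y) y :=
    ((contDiff_phaseExcess c).differentiable_one y).hasDerivAt
  have boundary_zero : V (-M) = 0 ∧ V M = 0 := by
    constructor <;> exact Function.notMem_support.1 fun h ↦ by simpa using supp_V h
  have dP (z : ℝ) : HasDerivAt (fun z ↦ V z * (q (z - x) - 1)) (-derivWeight V q x z) z :=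
    ((hV.differentiable_one z).hasDerivAt.mul
      (((hq.differentiable_one _).hasDerivAt.comp_sub_const z x).sub_const 1)).congr_deriv
      (by rw [derivWeight]; ring)
  have by_parts := two_pi_I_mul_integral_mul_deriv_mul_e (a := -M) (b := M) (fun z _ ↦ dP z)
    (fun z _ ↦ ((dψ _).comp_sub_const z x).const_mul (κ * Real.exp x))
    (by unfold derivWeight; fun_prop) (by fun_prop)
  have dphase (x z : ℝ) : HasDerivAt (fun x ↦ κ * Real.exp x * phaseExcess c (z - x))
      ((q (z - x) - 1) * (κ * Real.exp x * deriv (phaseExcess c) (z - x))) x :=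
    (((Real.hasDerivAt_exp x).const_mul κ).mul ((dψ _).comp_const_sub z x)).congr_deriv (by
      rw [hmul]; ring)
  have hderiv := hasDerivAt_intervalIntegral_of_continuous (by fun_prop) (by fun_prop)
    (fun x z ↦ (hasDerivAt_e_comp (dphase x z)).const_mul (V z : ℂ)) (-M) M x
  have eq_interval : stationaryAmplitude c V κ = fun x ↦
      ∫ z in -M..M, (V z : ℂ) * e (κ * Real.exp x * phaseExcess c (z - x)) :=
    funext fun x ↦ integral_eq_intervalIntegral_of_support_subset supp_V _
  rw [eq_interval, integral_eq_intervalIntegral_of_support_subset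
    ((support_derivWeight_subset V q x).trans hsupp)]
  refine hderiv.congr_deriv (.trans ?_ (by_parts.trans ?_))
  · rw [← intervalIntegral.integral_const_mul]
    refine intervalIntegral.integral_congr fun z _ ↦ ?_
    push_cast
    ring
  · simp only [boundary_zero, zero_mul, Complex.ofReal_zero, sub_zero, zero_sub, neg_mul,
      Complex.ofReal_neg, intervalIntegral.integral_neg, neg_neg]

lemma exists_norm_integral_derivWeight_mul_e_le {q : ℝ → ℝ} (hc : 1 < c) (hV : ContDiff ℝ 2 V)
    (hsupp : tsupport V ⊆ Set.Ioo (-M) M) (hq : ContDiff ℝ 2 q) (N : ℝ) :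
    ∃ C > 0, ∀ Y > 0, ∀ x, |x| ≤ N →
      ‖∫ z, (derivWeight V q x z : ℂ) * e (Y * phaseExcess c (z - x))‖ ≤ C / √Y := by
  have hV' : ContDiff ℝ 1 (deriv V) := hV.deriv'
  have hq' : ContDiff ℝ 1 (deriv q) := hq.deriv'
  have : Continuous V := hV.continuous
  have : Continuous q := hq.continuous
  have : Continuous (deriv V) := hV'.continuous
  have : Continuous (deriv q) := hq'.continuous
  have : Continuous (deriv (deriv V)) := hV'.continuous_deriv_one
  have : Continuous (deriv (deriv q)) := hq'.continuous_deriv_one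
  have dV (z : ℝ) : HasDerivAt V (deriv V z) z := (hV.differentiable two_ne_zero z).hasDerivAt
  have dV' (z : ℝ) : HasDerivAt (deriv V) (deriv (deriv V) z) z :=
    (hV'.differentiable_one z).hasDerivAt
  have dq (x z : ℝ) : HasDerivAt (fun z ↦ q (z - x)) (deriv q (z - x)) z :=
    (hq.differentiable two_ne_zero _).hasDerivAt.comp_sub_const z x
  have dq' (x z : ℝ) : HasDerivAt (fun z ↦ deriv q (z - x)) (deriv (deriv q) (z - x)) z :=
    (hq'.differentiable_one _).hasDerivAt.comp_sub_const z x
  have cont_weight : Continuous ↿(derivWeight V q) := by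
    change Continuous fun p : ℝ × ℝ ↦ derivWeight V q p.1 p.2
    unfold derivWeight
    fun_prop
  exact exists_norm_integral_mul_e_phaseExcess_le hc N
    (fun x z ↦ ((dV' z).mul ((dq x z).const_sub 1)).sub ((dV z).mul (dq' x z)))
    cont_weight (by fun_prop) fun x ↦ (support_derivWeight_subset V q x).trans hsupp

lemma exists_norm_stationaryAmplitude_le (hc : 1 < c) (hV : ContDiff ℝ 2 V)
    (hsupp : tsupport V ⊆ Set.Ioo (-M) M) (N : ℝ) :
    ∃ C > 0, ∀ κ > 0, ContDiff ℝ 1 (stationaryAmplitude c V κ) ∧ ∀ x, |x| ≤ N →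
      ‖stationaryAmplitude c V κ x‖ ≤ C / √(κ * Real.exp x) ∧
      ‖deriv (stationaryAmplitude c V κ) x‖ ≤ C / √(κ * Real.exp x) := by
  obtain ⟨q, hq, hmul⟩ := exists_contDiff_phaseExcess_eq_mul_deriv hc
  have hV₁ : ContDiff ℝ 1 V := hV.of_le one_le_two
  have hq₁ : ContDiff ℝ 1 q := hq.of_le one_le_two
  have : Continuous V := hV.continuous
  have : Continuous q := hq.continuous
  have : Continuous (deriv V) := hV₁.continuous_deriv_one
  have : Continuous (deriv q) := hq₁.continuous_deriv_one
  obtain ⟨C, hC, bound⟩ := exists_norm_integral_mul_e_phaseExcess_le hc N (F := fun _ ↦ V)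
    (fun _ z ↦ (hV₁.differentiable_one z).hasDerivAt) (by fun_prop) (by fun_prop)
    fun _ ↦ (subset_tsupport V).trans hsupp
  obtain ⟨C', _, bound'⟩ := exists_norm_integral_derivWeight_mul_e_le hc hV hsupp hq N
  refine ⟨max C C', by positivity, fun κ hκ ↦ ?_⟩
  have hderiv := hasDerivAt_stationaryAmplitude hV₁ hsupp hq₁ hmul κ
  refine ⟨contDiff_one_iff_deriv.2 ⟨fun x ↦ (hderiv x).differentiableAt, ?_⟩, fun x hx ↦ ⟨?_, ?_⟩⟩
  · rw [funext fun x ↦ (hderiv x).deriv.trans (integral_eq_intervalIntegral_of_support_subset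
      ((support_derivWeight_subset V q x).trans hsupp) _)]
    unfold derivWeight
    exact intervalIntegral.continuous_parametric_intervalIntegral_of_continuous' (by fun_prop) _ _
  · exact (bound _ (by positivity) x hx).trans (by gcongr; exact le_max_left _ _)
  · rw [(hderiv x).deriv]
    exact (bound' _ (by positivity) x hx).trans (by gcongr; exact le_max_right _ _)

end StationaryAmplitude

section OscIntegral

variable {c M k₁ k₂ : ℝ} {V : ℝ → ℝ}

/-- The oscillatory integral with weight `V` and phase `t * u ^ c - y * u` in the logarithmic
variable `x = log u`. It is the Fourier transform at `y` of a smoothly truncated `e (t * u ^ c)`,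
hence the dual side of Poisson summation. -/
noncomputable def oscIntegral (c : ℝ) (V : ℝ → ℝ) (t y : ℝ) : ℂ :=
  ∫ x, (V x : ℂ) * e (t * Real.exp (c * x) - y * Real.exp x)

lemma mul_exp_mul_sub_mul_exp_ne_zero (hc : 1 < c) (hk₁ : k₁ < c * Real.exp (-((c - 1) * M)))
    (hk₂ : c * Real.exp ((c - 1) * M) < k₂) {α β x : ℝ} (hα : 0 ≤ α) (hαβ : α + |β| = 1)
    (h : β ≤ k₁ * α ∨ k₂ * α ≤ β) (hx : x ∈ Set.Icc (-M) M) :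
    α * (c * Real.exp (c * x)) - β * Real.exp x ≠ 0 := by
  have factor : α * (c * Real.exp (c * x)) - β * Real.exp x =
      (α * (c * Real.exp ((c - 1) * x)) - β) * Real.exp x := by
    rw [sub_mul, mul_assoc α, mul_assoc c, ← Real.exp_add]
    ring_nf
  have lower : c * Real.exp (-((c - 1) * M)) ≤ c * Real.exp ((c - 1) * x) := by
    gcongr
    nlinarith [hx.1]
  have upper : c * Real.exp ((c - 1) * x) ≤ c * Real.exp ((c - 1) * M) := by
    gcongr
    exact hx.2
  rw [factor]
  refine mul_ne_zero (fun hzero ↦ ?_) (Real.exp_pos x).ne'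
  have α_eq_zero : α = 0 := hα.eq_or_lt.elim Eq.symm fun hα ↦ by
    rcases h with h | h <;> nlinarith
  simp only [α_eq_zero, zero_mul, zero_sub, neg_eq_zero] at hzero
  simp [α_eq_zero, hzero] at hαβ

lemma isCompact_setOf_nonstationary (k₁ k₂ : ℝ) :
    IsCompact {p : ℝ × ℝ | 0 ≤ p.1 ∧ p.1 + |p.2| = 1 ∧ (p.2 ≤ k₁ * p.1 ∨ k₂ * p.1 ≤ p.2)} := by
  have closed_union : IsClosed {p : ℝ × ℝ | p.2 ≤ k₁ * p.1 ∨ k₂ * p.1 ≤ p.2} :=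
    (isClosed_le continuous_snd (continuous_fst.const_mul k₁)).union
      (isClosed_le (continuous_fst.const_mul k₂) continuous_snd)
  have closed_sphere : IsClosed {p : ℝ × ℝ | p.1 + |p.2| = 1} :=
    isClosed_eq (by fun_prop) continuous_const
  exact (isCompact_Icc.prod isCompact_Icc).of_isClosed_subset
    (s := Set.Icc (0 : ℝ) 1 ×ˢ Set.Icc (-1 : ℝ) 1)
    ((isClosed_le continuous_const continuous_fst).inter (closed_sphere.inter closed_union))
    fun p ⟨hα, hαβ, _⟩ ↦ ⟨⟨hα, by linarith [abs_nonneg p.2]⟩, abs_le.1 (by linarith)⟩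

lemma exists_norm_oscIntegral_le_div_sq (hc : 1 < c) (hM : 0 ≤ M) (hV : ContDiff ℝ 2 V)
    (hsupp : tsupport V ⊆ Set.Ioo (-M) M) (hk₁ : k₁ < c * Real.exp (-((c - 1) * M)))
    (hk₂ : c * Real.exp ((c - 1) * M) < k₂) :
    ∃ K > 0, ∀ t > 0, ∀ y, y ≤ k₁ * t ∨ k₂ * t ≤ y →
      ‖oscIntegral c V t y‖ ≤ K / (t + |y|) ^ 2 := by
  have dexp (x : ℝ) : HasDerivAt (fun x ↦ Real.exp (c * x)) (c * Real.exp (c * x)) x :=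
    by simpa [mul_comm] using ((hasDerivAt_id x).const_mul c).exp
  have notMem_endpoints : -M ∉ tsupport V ∧ M ∉ tsupport V := by
    constructor <;> exact fun h ↦ by simpa using hsupp h
  have notMem_deriv {x : ℝ} (hx : x ∉ tsupport V) : deriv V x = 0 :=
    Function.notMem_support.1 fun h ↦ hx (support_deriv_subset h)
  obtain ⟨K, hK, bound⟩ := exists_norm_integral_mul_e_le_div_sq
    (isCompact_setOf_nonstationary k₁ k₂)
    (g := fun p x ↦ p.1 * Real.exp (c * x) - p.2 * Real.exp x)
    (g₁ := fun p x ↦ p.1 * (c * Real.exp (c * x)) - p.2 * Real.exp x)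
    (g₂ := fun p x ↦ p.1 * (c * (c * Real.exp (c * x))) - p.2 * Real.exp x)
    (g₃ := fun p x ↦ p.1 * (c * (c * (c * Real.exp (c * x)))) - p.2 * Real.exp x)
    (fun p x ↦ ((dexp x).const_mul p.1).sub ((Real.hasDerivAt_exp x).const_mul p.2))
    (fun p x ↦ (((dexp x).const_mul c).const_mul p.1).sub ((Real.hasDerivAt_exp x).const_mul p.2))
    (fun p x ↦ ((((dexp x).const_mul c).const_mul c).const_mul p.1).sub
      ((Real.hasDerivAt_exp x).const_mul p.2))
    (by fun_prop) (by fun_prop) (by fun_prop)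
    (fun p ⟨hα, hαβ, h⟩ x hx ↦ mul_exp_mul_sub_mul_exp_ne_zero hc hk₁ hk₂ hα hαβ h
      (by rwa [Set.uIcc_of_le (by linarith)] at hx))
    hV (image_eq_zero_of_notMem_tsupport notMem_endpoints.1)
    (image_eq_zero_of_notMem_tsupport notMem_endpoints.2)
    (notMem_deriv notMem_endpoints.1) (notMem_deriv notMem_endpoints.2)
  refine ⟨K, hK, fun t ht y hy ↦ ?_⟩
  have hY : 0 < t + |y| := by positivity
  have scaled := bound (t / (t + |y|), y / (t + |y|)) ⟨by positivity, ?_, ?_⟩ (t + |y|) hY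
  · rw [oscIntegral, integral_eq_intervalIntegral_of_support_subset
      ((subset_tsupport V).trans hsupp)]
    convert scaled using 7 with x
    field_simp
  · rw [abs_div, abs_of_pos hY]
    field_simp
  · simp only [← mul_div_assoc]
    exact hy.imp (fun h ↦ by gcongr) (fun h ↦ by gcongr)

lemma oscIntegral_eq_stationaryAmplitude_mul_e {c' : ℝ} (hcc' : c.HolderConjugate c')
    (V : ℝ → ℝ) {P y : ℝ} (hP : 0 < P) (hy : 0 < y) (v : ℝ) :
    oscIntegral c V (P * Real.exp v) y =
      stationaryAmplitude c V (y / c) ((c' - 1) * (Real.log (y / (c * P)) - v)) *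
        e (-((c - 1) * (P * (y / (c * P)) ^ c') * Real.exp (-((c' - 1) * v)))) := by
  have hc : 0 < c := hcc'.pos
  have conj_mul : (c - 1) * (c' - 1) = 1 := by linarith [hcc'.mul_eq_add]
  have hcP : 0 < y / (c * P) := by positivity
  set x₀ := (c' - 1) * (Real.log (y / (c * P)) - v)
  have critical : y * Real.exp x₀ = c * (P * Real.exp v * Real.exp (c * x₀)) := by
    have : v + c * x₀ = Real.log (y / (c * P)) + x₀ := by
      linear_combination (Real.log (y / (c * P)) - v) * conj_mul
    rw [mul_assoc P, ← Real.exp_add, this, Real.exp_add, Real.exp_log hcP]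
    field_simp
  have phase_at_critical : y / c * Real.exp x₀ =
      P * (y / (c * P)) ^ c' * Real.exp (-((c' - 1) * v)) := by
    have : x₀ = Real.log (y / (c * P)) * c' + -((c' - 1) * v) - Real.log (y / (c * P)) := by
      ring
    rw [this, Real.exp_sub, Real.exp_add, ← Real.rpow_def_of_pos hcP, Real.exp_log hcP]
    field_simp
  rw [oscIntegral, stationaryAmplitude, ← integral_mul_const]
  refine integral_congr_ae (.of_forall fun x ↦ ?_)
  simp only
  rw [mul_exp_sub_mul_exp_eq_phaseExcess hc.ne' critical, sub_eq_add_neg, e_add,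
    ← mul_assoc (V x : ℂ), phase_at_critical, mul_assoc (c - 1)]

lemma abs_log_le_add_of_mem_Icc {a b x : ℝ} (ha : 0 < a) (hx : x ∈ Set.Icc a b) :
    |Real.log x| ≤ |Real.log a| + |Real.log b| :=
  (abs_le_max_abs_abs (Real.log_le_log ha hx.1)
    (Real.log_le_log (ha.trans_le hx.1) hx.2)).trans
    (max_le_add_of_nonneg (abs_nonneg _) (abs_nonneg _))

lemma exists_oscIntegral_eq_mul_e {c' : ℝ} (hcc' : c.HolderConjugate c') (hk₁ : 0 < k₁)
    (k₂ : ℝ) (hV : ContDiff ℝ 2 V) (hsupp : tsupport V ⊆ Set.Ioo (-M) M) :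
    ∃ K > 0, ∀ P > 0, ∀ y ∈ Set.Icc (k₁ * P) (k₂ * P), ∃ A : ℝ → ℂ, ContDiff ℝ 1 A ∧
      (∀ v ∈ Set.Icc (0 : ℝ) 1, ‖A v‖ ≤ K / √P ∧ ‖deriv A v‖ ≤ K / √P) ∧
      ∀ v, oscIntegral c V (P * Real.exp v) y =
        A v * e (-((c - 1) * (P * (y / (c * P)) ^ c') * Real.exp (-((c' - 1) * v)))) := by
  have hc : 0 < c := hcc'.pos
  have hc' : 0 < c' - 1 := hcc'.symm.sub_one_pos
  set N := (c' - 1) * (|Real.log (k₁ / c)| + |Real.log (k₂ / c)| + 1)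
  obtain ⟨C, hC, bound⟩ := exists_norm_stationaryAmplitude_le hcc'.lt hV hsupp N
  set κ₀ := k₁ / c * Real.exp (-N)
  refine ⟨C * c' / √κ₀, by have := hcc'.symm.pos; positivity, fun P hP y ⟨hy₁, hy₂⟩ ↦ ?_⟩
  have hy : 0 < y := lt_of_lt_of_le (by positivity) hy₁
  set critical : ℝ → ℝ := fun v ↦ (c' - 1) * (Real.log (y / (c * P)) - v)
  obtain ⟨smooth, amplitude_le⟩ := bound (y / c) (by positivity)
  have dcritical (v : ℝ) : HasDerivAt critical (-(c' - 1)) v :=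
    (((hasDerivAt_id v).const_sub _).const_mul (c' - 1)).congr_deriv (by ring)
  have log_le : |Real.log (y / (c * P))| ≤ |Real.log (k₁ / c)| + |Real.log (k₂ / c)| := by
    refine abs_log_le_add_of_mem_Icc (by positivity) ⟨?_, ?_⟩
    · rw [div_le_div_iff₀ hc (by positivity)]
      linear_combination c * hy₁
    · rw [div_le_div_iff₀ (by positivity) hc]
      linear_combination c * hy₂
  have critical_le {v : ℝ} (hv : v ∈ Set.Icc (0 : ℝ) 1) : |critical v| ≤ N := by
    rw [abs_mul, abs_of_pos hc']
    refine mul_le_mul_of_nonneg_left ?_ hc'.le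
    linarith [abs_sub (Real.log (y / (c * P))) v, abs_le.2 ⟨by linarith [hv.1], hv.2⟩]
  have div_sqrt_le {v : ℝ} (hv : v ∈ Set.Icc (0 : ℝ) 1) :
      C / √(y / c * Real.exp (critical v)) ≤ C / √κ₀ / √P := by
    rw [div_div, ← Real.sqrt_mul (by positivity)]
    refine div_le_div_of_nonneg_left hC.le (by positivity) (Real.sqrt_le_sqrt ?_)
    calc κ₀ * P = k₁ * P / c * Real.exp (-N) := by ring
      _ ≤ y / c * Real.exp (critical v) := by
        gcongr
        exact (abs_le.1 (critical_le hv)).1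
  refine ⟨fun v ↦ stationaryAmplitude c V (y / c) (critical v), smooth.comp (by fun_prop),
    fun v hv ↦ ?_, oscIntegral_eq_stationaryAmplitude_mul_e hcc' V hP hy⟩
  obtain ⟨value_le, deriv_le⟩ := amplitude_le _ (critical_le hv)
  have one_le : 1 ≤ c' := by linarith
  have const_le {r : ℝ} (hr : r ≤ c') : r * (C / √κ₀ / √P) ≤ C * c' / √κ₀ / √P :=
    calc r * (C / √κ₀ / √P) ≤ c' * (C / √κ₀ / √P) := by gcongr
      _ = C * c' / √κ₀ / √P := by ring
  refine ⟨value_le.trans ((div_sqrt_le hv).trans (by simpa using const_le one_le)), ?_⟩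
  have dA := (smooth.differentiable_one _).hasDerivAt.scomp v (dcritical v)
  change ‖deriv (stationaryAmplitude c V (y / c) ∘ critical) v‖ ≤ _
  rw [dA.deriv, norm_smul, Real.norm_eq_abs, abs_neg, abs_of_pos hc']
  exact (mul_le_mul_of_nonneg_left (deriv_le.trans (div_sqrt_le hv)) hc'.le).trans
    (const_le (by linarith))

end OscIntegral

section Poisson

open FourierTransform

variable {c M k₁ k₂ : ℝ} {ω : ℝ → ℝ}

/-- The weight `ω` in the logarithmic variable, including the Jacobian of `u = exp x`. -/
noncomputable def logWeight (ω : ℝ → ℝ) (x : ℝ) : ℝ := ω (Real.exp x) * Real.exp x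

/-- The exponential sum `∑ₙ ω (n / X) e (t (n / X) ^ c)` for a weight `ω` supported in
`(0, exp M)`; the cutoff `M` only serves to write it as a finite sum. -/
noncomputable def smoothSum (c M : ℝ) (ω : ℝ → ℝ) (X t : ℝ) : ℂ :=
  expSum (Finset.range ⌈X * Real.exp M⌉₊) (fun n ↦ (ω (n / X) : ℂ))
    (fun n ↦ ((n : ℝ) / X) ^ c) t

lemma contDiff_logWeight {k : WithTop ℕ∞} (hω : ContDiff ℝ k ω) : ContDiff ℝ k (logWeight ω) :=
  (hω.comp Real.contDiff_exp).mul Real.contDiff_exp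

lemma tsupport_logWeight_subset
    (hsupp : tsupport ω ⊆ Set.Ioo (Real.exp (-M)) (Real.exp M)) :
    tsupport (logWeight ω) ⊆ Set.Ioo (-M) M := by
  have : tsupport (logWeight ω) ⊆ Real.exp ⁻¹' tsupport ω :=
    closure_minimal (fun x hx ↦ subset_tsupport ω (left_ne_zero_of_mul hx))
      ((isClosed_tsupport ω).preimage Real.continuous_exp)
  exact this.trans fun x hx ↦ ⟨Real.exp_lt_exp.1 (hsupp hx).1, Real.exp_lt_exp.1 (hsupp hx).2⟩

lemma integral_eq_integral_exp_of_support_subset {E : Type*} [NormedAddCommGroup E]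
    [NormedSpace ℝ E] {g : ℝ → E} {a : ℝ} (hg : Function.support g ⊆ Set.Ioi (Real.exp a)) :
    ∫ u, g u = ∫ x, Real.exp x • g (Real.exp x) := by
  rw [← setIntegral_eq_integral_of_forall_compl_eq_zero
      fun u hu ↦ Function.notMem_support.1 fun h ↦ hu (hg h), ← integral_comp_exp_Ioi,
    setIntegral_eq_integral_of_forall_compl_eq_zero fun x hx ↦ ?_]
  rw [Function.notMem_support.1 fun h ↦ hx (Real.exp_lt_exp.1 (hg h)), smul_zero]

lemma fourier_weight_mul_e_rpow {X : ℝ} (hX : 0 < X)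
    (hsupp : Function.support ω ⊆ Set.Ioi (Real.exp (-M))) (t y : ℝ) :
    𝓕 (fun u : ℝ ↦ (ω (u / X) : ℂ) * e (t * (u / X) ^ c)) y =
      X * oscIntegral c (logWeight ω) t (y * X) := by
  set g : ℝ → ℂ := fun u ↦ (ω u : ℂ) * e (t * u ^ c - y * X * u)
  have supp_g : Function.support g ⊆ Set.Ioi (Real.exp (-M)) := fun u hu ↦
    hsupp (Complex.ofReal_ne_zero.1 (left_ne_zero_of_mul hu))
  have integrand (u : ℝ) : Complex.exp (↑(-2 * Real.pi * u * y) * Complex.I) •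
      ((ω (u / X) : ℂ) * e (t * (u / X) ^ c)) = g (u / X) := by
    have : y * X * (u / X) = y * u := by field_simp
    simp only [g, smul_eq_mul, this]
    rw [mul_left_comm, sub_eq_add_neg, e_add, mul_comm (e _)]
    congr 2
    unfold e
    push_cast
    ring_nf
  calc 𝓕 (fun u : ℝ ↦ (ω (u / X) : ℂ) * e (t * (u / X) ^ c)) y
      = ∫ u, g (u / X) := by
        rw [Real.fourier_real_eq_integral_exp_smul]
        exact integral_congr_ae (.of_forall integrand)
    _ = X * ∫ u, g u := by
        rw [Measure.integral_comp_div, abs_of_pos hX, Complex.real_smul]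
    _ = X * oscIntegral c (logWeight ω) t (y * X) := by
        rw [integral_eq_integral_exp_of_support_subset supp_g, oscIntegral]
        congr 2 with x
        simp only [g, logWeight]
        rw [Complex.real_smul, ← Real.exp_mul, mul_comm x]
        push_cast
        ring

lemma exists_hasSum_norm_sub_sum_le {ι : Type*} {f : ι → ℂ} {g : ι → ℝ} {b : ℝ}
    (hg : HasSum g b) (hg₀ : ∀ i, 0 ≤ g i) (s : Finset ι) (hfg : ∀ i ∉ s, ‖f i‖ ≤ g i) :
    ∃ a, HasSum f a ∧ ‖a - ∑ i ∈ s, f i‖ ≤ b := by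
  classical
  set tail : ι → ℂ := fun i ↦ if i ∈ s then 0 else f i
  have norm_tail_le (i : ι) : ‖tail i‖ ≤ g i := by
    by_cases hi : i ∈ s
    · simpa [tail, hi] using hg₀ i
    · simpa [tail, hi] using hfg i hi
  have hasSum_head : HasSum (fun i ↦ if i ∈ s then f i else 0) (∑ i ∈ s, f i) := by
    rw [Finset.sum_congr rfl fun i hi ↦ (if_pos hi).symm]
    exact hasSum_sum_of_ne_finset_zero fun i hi ↦ if_neg hi
  have hasSum_tail := (Summable.of_norm_bounded hg.summable norm_tail_le).hasSum
  refine ⟨∑ i ∈ s, f i + ∑' i, tail i, (hasSum_head.add hasSum_tail).congr_fun fun i ↦ ?_, ?_⟩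
  · by_cases hi : i ∈ s <;> simp [tail, hi]
  · rw [add_sub_cancel_left]
    exact tsum_of_norm_bounded hg norm_tail_le

lemma tsum_weight_mul_e_rpow_eq_smoothSum {X : ℝ} (hX : 0 < X)
    (hsupp : Function.support ω ⊆ Set.Ioo (Real.exp (-M)) (Real.exp M)) (t : ℝ) :
    ∑' n : ℤ, (ω (n / X) : ℂ) * e (t * (n / X) ^ c) = smoothSum c M ω X t := by
  rw [tsum_eq_sum (s := (Finset.range ⌈X * Real.exp M⌉₊).map Nat.castEmbedding) fun n hn ↦ ?_,
    Finset.sum_map]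
  · simp [smoothSum, expSum]
  · suffices ω (n / X) = 0 by rw [this, Complex.ofReal_zero, zero_mul]
    refine Function.notMem_support.1 fun h ↦ hn ?_
    obtain ⟨hn₀, hn₁⟩ := hsupp h
    have n_pos : (0 : ℝ) < n := by
      simpa [hX] using (mul_pos ((Real.exp_pos _).trans hn₀) hX)
    lift n to ℕ using (by exact_mod_cast n_pos.le)
    rw [div_lt_iff₀' hX] at hn₁
    exact Finset.mem_map_of_mem _ (Finset.mem_range.2 (Nat.lt_ceil.2 (by exact_mod_cast hn₁)))

lemma smoothSum_eq_tsum_oscIntegral {X : ℝ} (hc : 0 ≤ c) (hX : 0 < X) (hω : Continuous ω)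
    (hsupp : tsupport ω ⊆ Set.Ioo (Real.exp (-M)) (Real.exp M)) (t : ℝ)
    (hsummable : Summable fun m : ℤ ↦ X * oscIntegral c (logWeight ω) t (m * X)) :
    smoothSum c M ω X t = ∑' m : ℤ, X * oscIntegral c (logWeight ω) t (m * X) := by
  have supp_ω := (subset_tsupport ω).trans hsupp
  set h : ℝ → ℂ := fun u ↦ (ω (u / X) : ℂ) * e (t * (u / X) ^ c)
  have fourier_h (y : ℝ) : 𝓕 h y = X * oscIntegral c (logWeight ω) t (y * X) :=
    fourier_weight_mul_e_rpow hX (supp_ω.trans fun u hu ↦ hu.1) t y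
  have cont_h : Continuous h :=
    (Complex.continuous_ofReal.comp (hω.comp (continuous_id.div_const X))).mul
      (continuous_e.comp (((Real.continuous_rpow_const hc).comp
        (continuous_id.div_const X)).const_mul t))
  have compact_supp_ω : HasCompactSupport ω :=
    isCompact_Icc.of_isClosed_subset (isClosed_tsupport ω) (hsupp.trans Set.Ioo_subset_Icc_self)
  have compact_supp_h : HasCompactSupport h := by
    have := (compact_supp_ω.comp_smul (inv_ne_zero hX.ne')).comp_left Complex.ofReal_zero
    simp only [smul_eq_mul, ← div_eq_inv_mul] at this
    exact this.mul_right
  have decay : h =O[Filter.cocompact ℝ] fun u ↦ |u| ^ (-2 : ℝ) := by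
    rw [hasCompactSupport_iff_eventuallyEq, Filter.coclosedCompact_eq_cocompact] at compact_supp_h
    exact compact_supp_h.trans_isBigO (Asymptotics.isBigO_zero _ _)
  have poisson := Real.tsum_eq_tsum_fourier_of_rpow_decay_of_summable cont_h one_lt_two decay
    (by simpa only [fourier_h] using hsummable) 0
  simpa only [fourier_h, zero_add, QuotientAddGroup.mk_zero, fourier_eval_zero, mul_one, h,
    tsum_weight_mul_e_rpow_eq_smoothSum hX supp_ω] using poisson

lemma exists_norm_smoothSum_sub_sum_oscIntegral_le (hc : 1 < c) (hM : 0 ≤ M)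
    (hω : ContDiff ℝ 2 ω) (hsupp : tsupport ω ⊆ Set.Ioo (Real.exp (-M)) (Real.exp M))
    (hk₁₀ : 0 ≤ k₁) (hk₁ : k₁ < c * Real.exp (-((c - 1) * M)))
    (hk₂ : c * Real.exp ((c - 1) * M) < k₂) :
    ∃ K > 0, ∀ X > 0, ∀ t > 0, ∀ s : Finset ℕ,
      (∀ m : ℕ, m ∉ s → m * X ≤ k₁ * t ∨ k₂ * t ≤ m * X) →
      ‖smoothSum c M ω X t - X * ∑ m ∈ s, oscIntegral c (logWeight ω) t (m * X)‖ ≤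
        K * (X / t ^ 2 + 1 / X) := by
  obtain ⟨K, hK, bound⟩ := exists_norm_oscIntegral_le_div_sq hc hM (contDiff_logWeight hω)
    (tsupport_logWeight_subset hsupp) hk₁ hk₂
  set σ := ∑' m : ℤ, 1 / (m : ℝ) ^ 2
  have : 0 ≤ σ := tsum_nonneg fun m ↦ by positivity
  refine ⟨K * (1 + σ), by positivity, fun X hX t ht s hs ↦ ?_⟩
  set g : ℤ → ℝ := fun m ↦ (if m = 0 then K * X / t ^ 2 else 0) + K / X * (1 / (m : ℝ) ^ 2)
  have hasSum_g : HasSum g (K * X / t ^ 2 + K / X * σ) :=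
    (hasSum_ite_eq 0 _).add ((Real.summable_one_div_int_pow.2 one_lt_two).hasSum.mul_left _)
  have norm_le (m : ℤ) (hm : m ∉ s.map Nat.castEmbedding) :
      ‖X * oscIntegral c (logWeight ω) t (m * X)‖ ≤ g m := by
    have nonstationary : m * X ≤ k₁ * t ∨ k₂ * t ≤ m * X := by
      rcases lt_or_ge m 0 with hneg | hnonneg
      · left
        have : (m : ℝ) * X ≤ 0 :=
          mul_nonpos_of_nonpos_of_nonneg (by exact_mod_cast hneg.le) hX.le
        linarith [mul_nonneg hk₁₀ ht.le]
      · lift m to ℕ using hnonneg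
        exact_mod_cast hs m fun h ↦ hm (Finset.mem_map_of_mem _ h)
    rw [norm_mul, Complex.norm_real, Real.norm_of_nonneg hX.le]
    refine (mul_le_mul_of_nonneg_left (bound t ht _ nonstationary) hX.le).trans ?_
    rcases eq_or_ne m 0 with rfl | hm₀
    · simp [g, mul_div_assoc, mul_div_left_comm]
    · have : (m : ℝ) ≠ 0 := by exact_mod_cast hm₀
      calc X * (K / (t + |m * X|) ^ 2) ≤ X * (K / (m * X) ^ 2) := by
            rw [← sq_abs (m * X : ℝ)]
            gcongr
            linarith
        _ = g m := by
            simp only [g, if_neg hm₀]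
            field_simp
            ring
  obtain ⟨a, hasSum_a, ha⟩ := exists_hasSum_norm_sub_sum_le hasSum_g
    (fun m ↦ by simp only [g]; positivity) _ norm_le
  rw [smoothSum_eq_tsum_oscIntegral (by linarith) hX hω.continuous hsupp t hasSum_a.summable,
    hasSum_a.tsum_eq, Finset.mul_sum]
  simp only [Finset.sum_map, Nat.castEmbedding_apply, Int.cast_natCast] at ha
  refine ha.trans ?_
  have : 0 ≤ K * σ * (X / t ^ 2) + K / X := by positivity
  linear_combination this

end Poisson

section SeparationOfVariables

lemma integral_pow_le_integral_pow {g : ℝ → ℝ} (hg : Continuous g) (hg₀ : ∀ x, 0 ≤ g x) (n : ℕ) :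
    (∫ u in (0 : ℝ)..1, g u) ^ n ≤ ∫ u in (0 : ℝ)..1, g u ^ n := by
  simp only [intervalIntegral.integral_of_le zero_le_one]
  have : IsProbabilityMeasure (volume.restrict (Set.Ioc (0 : ℝ) 1)) := ⟨by simp⟩
  exact (convexOn_pow n).map_integral_le (continuous_pow n).continuousOn isClosed_Ici
    (.of_forall hg₀) (hg.integrableOn_Ioc) (hg.pow n).integrableOn_Ioc

lemma norm_le_norm_zero_add_integral_norm_deriv {E : Type*} [NormedAddCommGroup E]
    [NormedSpace ℝ E] [CompleteSpace E] {g : ℝ → E} (hg : ContDiff ℝ 1 g) {v : ℝ}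
    (hv : v ∈ Set.Icc (0 : ℝ) 1) : ‖g v‖ ≤ ‖g 0‖ + ∫ u in (0 : ℝ)..1, ‖deriv g u‖ := by
  have hg' : Continuous (deriv g) := hg.continuous_deriv le_rfl
  have ftc : ∫ u in (0 : ℝ)..v, deriv g u = g v - g 0 :=
    intervalIntegral.integral_deriv_eq_sub (fun u _ ↦ hg.differentiable one_ne_zero u)
      (hg'.intervalIntegrable _ _)
  calc ‖g v‖ = ‖g 0 + ∫ u in (0 : ℝ)..v, deriv g u‖ := by rw [ftc, add_sub_cancel]
    _ ≤ ‖g 0‖ + ∫ u in (0 : ℝ)..v, ‖deriv g u‖ := (norm_add_le _ _).trans <|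
      add_le_add_right (intervalIntegral.norm_integral_le_integral_norm hv.1) _
    _ ≤ ‖g 0‖ + ∫ u in (0 : ℝ)..1, ‖deriv g u‖ := by
      gcongr
      exact intervalIntegral.integral_mono_interval le_rfl hv.1 hv.2
        (.of_forall fun _ ↦ norm_nonneg _) (hg'.norm.intervalIntegrable _ _)

lemma integral_integral_le_of_forall_integral_left_le {F : ℝ → ℝ → ℝ} {D : ℝ}
    (hF : Continuous F.uncurry)
    (hD : ∀ u ∈ Set.Icc (0 : ℝ) 1, ∫ v in (0 : ℝ)..1, F v u ≤ D) :
    ∫ v in (0 : ℝ)..1, ∫ u in (0 : ℝ)..1, F v u ≤ D := by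
  have integrable : IntegrableOn F.uncurry (Set.uIoc (0 : ℝ) 1 ×ˢ Set.uIoc (0 : ℝ) 1) :=
    (hF.continuousOn.integrableOn_compact (isCompact_uIcc.prod isCompact_uIcc)).mono_set
      (Set.prod_mono Set.uIoc_subset_uIcc Set.uIoc_subset_uIcc)
  have cont : Continuous fun u ↦ ∫ v in (0 : ℝ)..1, F v u :=
    intervalIntegral.continuous_parametric_intervalIntegral_of_continuous' (f := fun u v ↦ F v u)
      (hF.comp continuous_swap) 0 1
  calc ∫ v in (0 : ℝ)..1, ∫ u in (0 : ℝ)..1, F v u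
    _ = ∫ u in (0 : ℝ)..1, ∫ v in (0 : ℝ)..1, F v u :=
      intervalIntegral_intervalIntegral_swap integrable
    _ ≤ ∫ _u in (0 : ℝ)..1, D := intervalIntegral.integral_mono_on zero_le_one
      (cont.intervalIntegrable _ _) (by simp) hD
    _ = D := by simp

variable {ι : Type*} {s : Finset ι} {A b : ι → ℝ → ℂ}

lemma norm_sum_mul_pow_le (hA : ∀ i ∈ s, ContDiff ℝ 1 (A i)) (w : ι → ℂ) (n : ℕ) {v : ℝ}
    (hv : v ∈ Set.Icc (0 : ℝ) 1) :
    ‖∑ i ∈ s, A i v * w i‖ ^ n ≤ 2 ^ (n - 1) *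
      (‖∑ i ∈ s, A i 0 * w i‖ ^ n + ∫ u in (0 : ℝ)..1, ‖∑ i ∈ s, deriv (A i) u * w i‖ ^ n) := by
  set g : ℝ → ℂ := fun u ↦ ∑ i ∈ s, A i u * w i
  have hg : ContDiff ℝ 1 g := ContDiff.sum fun i hi ↦ (hA i hi).mul contDiff_const
  have hg' (u : ℝ) : deriv g u = ∑ i ∈ s, deriv (A i) u * w i :=
    (HasDerivAt.fun_sum fun i hi ↦
      (((hA i hi).differentiable one_ne_zero u).hasDerivAt.mul_const _)).deriv
  simp only [← hg']
  have cont : Continuous fun u ↦ ‖deriv g u‖ := (hg.continuous_deriv le_rfl).norm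
  calc ‖g v‖ ^ n ≤ (‖g 0‖ + ∫ u in (0 : ℝ)..1, ‖deriv g u‖) ^ n := by
        gcongr
        exact norm_le_norm_zero_add_integral_norm_deriv hg hv
    _ ≤ 2 ^ (n - 1) * (‖g 0‖ ^ n + (∫ u in (0 : ℝ)..1, ‖deriv g u‖) ^ n) :=
        add_pow_le (norm_nonneg _)
          (intervalIntegral.integral_nonneg zero_le_one fun _ _ ↦ norm_nonneg _) n
    _ ≤ _ := by
        gcongr
        exact integral_pow_le_integral_pow cont (fun _ ↦ norm_nonneg _) n

lemma integral_norm_sum_mul_pow_le {α D : ℝ} {n : ℕ} (hn : n ≠ 0)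
    (hA : ∀ i ∈ s, ContDiff ℝ 1 (A i)) (hb : ∀ i ∈ s, Continuous (b i))
    (hα : ∀ i ∈ s, ∀ v ∈ Set.Icc (0 : ℝ) 1, ‖A i v‖ ≤ α ∧ ‖deriv (A i) v‖ ≤ α)
    (hD : ∀ a : ι → ℂ, (∀ i ∈ s, ‖a i‖ ≤ α) →
      ∫ v in (0 : ℝ)..1, ‖∑ i ∈ s, a i * b i v‖ ^ n ≤ D) :
    ∫ v in (0 : ℝ)..1, ‖∑ i ∈ s, A i v * b i v‖ ^ n ≤ 2 ^ n * D := by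
  have cont_fixed (a : ι → ℂ) : Continuous fun v ↦ ‖∑ i ∈ s, a i * b i v‖ ^ n :=
    (continuous_finsetSum _ fun i hi ↦ continuous_const.mul (hb i hi)).norm.pow n
  have cont_sum : Continuous fun v ↦ ‖∑ i ∈ s, A i v * b i v‖ ^ n :=
    (continuous_finsetSum _ fun i hi ↦ (hA i hi).continuous.mul (hb i hi)).norm.pow n
  have cont_deriv : Continuous fun p : ℝ × ℝ ↦ ‖∑ i ∈ s, deriv (A i) p.2 * b i p.1‖ ^ n :=
    (continuous_finsetSum _ fun i hi ↦ (((hA i hi).continuous_deriv le_rfl).comp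
      continuous_snd).mul ((hb i hi).comp continuous_fst)).norm.pow n
  have cont_inner :
      Continuous fun v ↦ ∫ u in (0 : ℝ)..1, ‖∑ i ∈ s, deriv (A i) u * b i v‖ ^ n :=
    intervalIntegral.continuous_parametric_intervalIntegral_of_continuous' cont_deriv 0 1
  calc ∫ v in (0 : ℝ)..1, ‖∑ i ∈ s, A i v * b i v‖ ^ n
    _ ≤ ∫ v in (0 : ℝ)..1, 2 ^ (n - 1) * (‖∑ i ∈ s, A i 0 * b i v‖ ^ n +
          ∫ u in (0 : ℝ)..1, ‖∑ i ∈ s, deriv (A i) u * b i v‖ ^ n) :=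
      intervalIntegral.integral_mono_on zero_le_one (cont_sum.intervalIntegrable _ _)
        ((((cont_fixed fun i ↦ A i 0).add cont_inner).const_mul _).intervalIntegrable _ _)
        fun v hv ↦ norm_sum_mul_pow_le hA (fun i ↦ b i v) n hv
    _ ≤ 2 ^ (n - 1) * (D + D) := by
      rw [intervalIntegral.integral_const_mul, intervalIntegral.integral_add
        ((cont_fixed _).intervalIntegrable _ _) (cont_inner.intervalIntegrable _ _)]
      gcongr
      · exact hD _ fun i hi ↦ (hα i hi 0 (by simp)).1
      · exact integral_integral_le_of_forall_integral_left_le cont_deriv fun u hu ↦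
          hD _ fun i hi ↦ (hα i hi u hu).2
    _ = 2 ^ n * D := by rw [← two_mul, ← mul_assoc, pow_sub_one_mul hn]

end SeparationOfVariables

section DualSum

lemma integral_comp_mul_exp_neg_le {F : ℝ → ℝ} (hF : Continuous F) (hF₀ : ∀ t, 0 ≤ F t)
    {β σ : ℝ} (hβ : 0 < β) (hσ : 0 < σ) :
    ∫ v in (0 : ℝ)..1, F (σ * Real.exp (-(β * v))) ≤
      Real.exp β / (β * σ) * ∫ t in (0 : ℝ)..σ, F t := by
  set f : ℝ → ℝ := fun v ↦ σ * Real.exp (-(β * v))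
  set f' : ℝ → ℝ := fun v ↦ -(β * f v)
  have hf (v : ℝ) : HasDerivAt f (f' v) v :=
    ((((hasDerivAt_id v).const_mul β).neg.exp).const_mul σ).congr_deriv <| by
      simp only [f', f, Pi.neg_apply, id]
      ring
  have pointwise : ∀ v ∈ Set.Icc (0 : ℝ) 1,
      F (f v) ≤ Real.exp β / (β * σ) * -((F ∘ f) v * f' v) := fun v hv ↦ by
    have weight : Real.exp β / (β * σ) * -((F ∘ f) v * f' v) =
        F (f v) * Real.exp (β - β * v) := by
      simp only [Function.comp_apply, f', sub_eq_add_neg, Real.exp_add]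
      simp only [f]
      field_simp
    rw [weight]
    exact le_mul_of_one_le_right (hF₀ _) (Real.one_le_exp (by nlinarith [hv.2]))
  calc ∫ v in (0 : ℝ)..1, F (f v)
    _ ≤ ∫ v in (0 : ℝ)..1, Real.exp β / (β * σ) * -((F ∘ f) v * f' v) :=
      intervalIntegral.integral_mono_on zero_le_one
        (Continuous.intervalIntegrable (by fun_prop) _ _)
        (Continuous.intervalIntegrable (by fun_prop) _ _) pointwise
    _ = Real.exp β / (β * σ) * ∫ t in f 1..f 0, F t := by
      rw [intervalIntegral.integral_const_mul, intervalIntegral.integral_neg,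
        intervalIntegral.integral_comp_mul_deriv (fun v _ ↦ hf v) (by fun_prop) hF,
        ← intervalIntegral.integral_symm]
    _ ≤ Real.exp β / (β * σ) * ∫ t in (0 : ℝ)..σ, F t := by
      gcongr
      refine intervalIntegral.integral_mono_interval (by positivity) ?_ (by simp [f])
        (.of_forall hF₀) (hF.intervalIntegrable _ _)
      simp only [f]
      gcongr
      linarith

lemma FourthMomentBound.exists_integral_mul_exp_neg_le {α θ : ℝ} (h : FourthMomentBound α θ)
    {R β : ℝ} (hR : 1 ≤ R) (hβ : 0 < β) :
    ∃ C > 0, ∀ Z : ℝ, 1 ≤ Z → ∀ (s : Finset ℕ) (a : ℕ → ℂ) (A : ℝ), 0 ≤ A →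
      (∀ n ∈ s, (n : ℝ) ∈ Set.Icc (Z / R) Z) → (∀ n ∈ s, ‖a n‖ ≤ A) → ∀ σ : ℝ, 0 < σ →
      ∫ v in (0 : ℝ)..1,
          ‖expSum s a (fun n ↦ ((n : ℝ) / Z) ^ α) (-(σ * Real.exp (-(β * v))))‖ ^ 4 ≤
        C * (1 / σ + 1 / Z ^ 2) * A ^ 4 * Z ^ (4 + θ) := by
  obtain ⟨C, hC, bound⟩ := h.exists_integral_le hR
  refine ⟨Real.exp β / β * C, by positivity, fun Z hZ s a A hA hs ha σ hσ ↦ ?_⟩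
  simp only [norm_expSum_neg]
  set b : ℕ → ℂ := fun n ↦ (starRingEnd ℂ) (a n)
  have hb : ∀ n ∈ s, ‖b n‖ ≤ A := fun n hn ↦ (Complex.norm_conj _).trans_le (ha n hn)
  calc _ ≤ Real.exp β / (β * σ) * ∫ t in (0 : ℝ)..σ,
          ‖expSum s b (fun n ↦ ((n : ℝ) / Z) ^ α) t‖ ^ 4 :=
        integral_comp_mul_exp_neg_le
          (F := fun t ↦ ‖expSum s b (fun n ↦ ((n : ℝ) / Z) ^ α) t‖ ^ 4) (by fun_prop)
          (fun _ ↦ by positivity) hβ hσ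
    _ ≤ Real.exp β / (β * σ) * ((σ / Z ^ 2 + 1) * (C * A ^ 4 * Z ^ (4 + θ))) := by
        gcongr
        exact bound Z hZ s b A hA hs hb σ hσ.le
    _ = Real.exp β / β * C * (1 / σ + 1 / Z ^ 2) * A ^ 4 * Z ^ (4 + θ) := by
        field_simp
        ring

lemma mem_Icc_div_of_mul_mem_Icc {k₁ k₂ P X x : ℝ} (hk₁ : 0 < k₁) (hk₂ : 0 < k₂) (hX : 0 < X)
    (hx : x * X ∈ Set.Icc (k₁ * P) (k₂ * P)) :
    x ∈ Set.Icc (k₂ * P / X / (k₂ / k₁)) (k₂ * P / X) := by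
  have lower : k₂ * P / X / (k₂ / k₁) = k₁ * P / X := by field_simp
  rw [lower]
  exact ⟨(div_le_iff₀ hX).2 hx.1, (le_div_iff₀ hX).2 hx.2⟩

lemma rpow_div_eq_mul_rpow_div {c k P X x : ℝ} (hc : 0 < c) (hk : 0 < k) (hP : 0 < P)
    (hX : 0 < X) (hx : 0 ≤ x) (p : ℝ) :
    (x * X / (c * P)) ^ p = (k / c) ^ p * (x / (k * P / X)) ^ p := by
  rw [← Real.mul_rpow (by positivity) (by positivity)]
  congr 1
  field_simp

lemma inv_add_inv_sq_mul_rpow_le {k r P X : ℝ} (hk : 0 < k) (hr : 0 < r) (hP : 0 < P)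
    (hX : 0 < X) (hPX : P ≤ 2 * X ^ 2) (θ : ℝ) :
    (1 / (r * P) + 1 / (k * P / X) ^ 2) * (k * P / X) ^ (4 + θ) ≤
      (2 * k ^ 2 / r + 1) * k ^ (2 + θ) * (P ^ 2 * (P ^ θ / X ^ (2 + θ))) := by
  set Z := k * P / X with hZ
  have hZ₀ : 0 < Z := by positivity
  have ratio_le : Z ^ 2 / (r * P) ≤ 2 * k ^ 2 / r := by
    rw [div_le_div_iff₀ (by positivity) hr, hZ, div_pow, div_mul_eq_mul_div,
      div_le_iff₀ (by positivity)]
    calc (k * P) ^ 2 * r = k ^ 2 * r * P * P := by ring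
      _ ≤ k ^ 2 * r * P * (2 * X ^ 2) := by gcongr
      _ = _ := by ring
  calc (1 / (r * P) + 1 / Z ^ 2) * Z ^ (4 + θ)
    _ = (Z ^ 2 / (r * P) + 1) * Z ^ (2 + θ) := by
      rw [show 4 + θ = 2 + (2 + θ) by ring, Real.rpow_add hZ₀, Real.rpow_two]
      field_simp
    _ ≤ (2 * k ^ 2 / r + 1) * Z ^ (2 + θ) := by gcongr
    _ = _ := by
      rw [hZ, Real.div_rpow (by positivity) hX.le, Real.mul_rpow hk.le hP.le, Real.rpow_add hP,
        Real.rpow_two]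
      ring

lemma FourthMomentBound.exists_integral_sum_oscIntegral_le {c c' θ M k₁ k₂ : ℝ} {V : ℝ → ℝ}
    (hcc' : c.HolderConjugate c') (h : FourthMomentBound c' θ) (hk₁ : 0 < k₁) (hk : k₁ ≤ k₂)
    (hV : ContDiff ℝ 2 V) (hsupp : tsupport V ⊆ Set.Ioo (-M) M) :
    ∃ K > 0, ∀ X : ℝ, 0 < X → ∀ P : ℝ, 0 < P → P ≤ 2 * X ^ 2 → ∀ s : Finset ℕ,
      (∀ m ∈ s, (m : ℝ) * X ∈ Set.Icc (k₁ * P) (k₂ * P)) →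
      ∫ v in (0 : ℝ)..1, ‖∑ m ∈ s, oscIntegral c V (P * Real.exp v) (m * X)‖ ^ 4 ≤
        K * (P ^ θ / X ^ (2 + θ)) := by
  have hc := hcc'.pos
  have hc₁ := hcc'.sub_one_pos
  have hk₂ : 0 < k₂ := hk₁.trans_le hk
  obtain ⟨K, hK, amplitude⟩ := exists_oscIntegral_eq_mul_e hcc' hk₁ k₂ hV hsupp
  obtain ⟨C, hC, bound⟩ := h.exists_integral_mul_exp_neg_le (R := k₂ / k₁)
    (by rwa [one_le_div hk₁]) hcc'.symm.sub_one_pos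
  set r := (c - 1) * (k₂ / c) ^ c'
  have hr : 0 < r := by positivity
  refine ⟨2 ^ 4 * C * (2 * k₂ ^ 2 / r + 1) * K ^ 4 * k₂ ^ (2 + θ), by positivity,
    fun X hX P hP hPX s hs ↦ ?_⟩
  obtain rfl | ⟨m₀, hm₀⟩ := s.eq_empty_or_nonempty
  · simp only [Finset.sum_empty, norm_zero, ne_eq, OfNat.ofNat_ne_zero, not_false_eq_true,
      zero_pow, intervalIntegral.integral_zero]
    positivity
  set Z := k₂ * P / X
  have mem_Icc : ∀ m ∈ s, (m : ℝ) ∈ Set.Icc (Z / (k₂ / k₁)) Z :=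
    fun m hm ↦ mem_Icc_div_of_mul_mem_Icc hk₁ hk₂ hX (hs m hm)
  have hZ₁ : 1 ≤ Z := by
    have pos : 0 < (m₀ : ℝ) := lt_of_lt_of_le (by positivity) (mem_Icc m₀ hm₀).1
    have one_le : (1 : ℝ) ≤ m₀ := by exact_mod_cast pos
    exact one_le.trans (mem_Icc m₀ hm₀).2
  choose! A smooth hA factor using fun m (hm : m ∈ s) ↦ amplitude P hP (m * X) (hs m hm)
  set σ := r * P
  set b : ℕ → ℝ → ℂ := fun m v ↦
    e (-(σ * Real.exp (-((c' - 1) * v))) * ((m : ℝ) / Z) ^ c')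
  have eq_mul (v : ℝ) : ∀ m ∈ s, oscIntegral c V (P * Real.exp v) (m * X) = A m v * b m v := by
    intro m hm
    rw [factor m hm v, rpow_div_eq_mul_rpow_div hc hk₂ hP hX m.cast_nonneg c']
    congr 2
    simp only [σ, r]
    ring
  calc _ = ∫ v in (0 : ℝ)..1, ‖∑ m ∈ s, A m v * b m v‖ ^ 4 := by
        simp only [fun v ↦ Finset.sum_congr rfl (eq_mul v)]
    _ ≤ 2 ^ 4 * (C * (1 / σ + 1 / Z ^ 2) * (K / √P) ^ 4 * Z ^ (4 + θ)) :=
        integral_norm_sum_mul_pow_le four_ne_zero smooth (fun m _ ↦ by fun_prop) hA fun a ha ↦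
          bound Z hZ₁ s a _ (by positivity) mem_Icc ha σ (by positivity)
    _ = 2 ^ 4 * C * K ^ 4 / P ^ 2 * ((1 / σ + 1 / Z ^ 2) * Z ^ (4 + θ)) := by
        have sqrt_pow : √P ^ 4 = P ^ 2 := by
          rw [show 4 = 2 * 2 from rfl, pow_mul, Real.sq_sqrt hP.le]
        rw [div_pow K, sqrt_pow]
        ring
    _ ≤ 2 ^ 4 * C * K ^ 4 / P ^ 2 *
          ((2 * k₂ ^ 2 / r + 1) * k₂ ^ (2 + θ) * (P ^ 2 * (P ^ θ / X ^ (2 + θ)))) :=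
        mul_le_mul_of_nonneg_left (inv_add_inv_sq_mul_rpow_le hk₂ hr hP hX hPX θ)
          (by positivity)
    _ = _ := by field_simp

end DualSum

section SmoothSum

lemma integral_le_mul_integral_comp_mul_exp {F : ℝ → ℝ} (hF : Continuous F) (hF₀ : ∀ t, 0 ≤ F t)
    {P : ℝ} (hP : 0 < P) :
    ∫ t in P..(Real.exp 1 * P), F t ≤ Real.exp 1 * P * ∫ v in (0 : ℝ)..1, F (P * Real.exp v) := by
  have subst := intervalIntegral.integral_comp_mul_deriv (a := 0) (b := 1) (g := F)
    (fun x _ ↦ (Real.hasDerivAt_exp x).const_mul P) (by fun_prop) hF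
  rw [Real.exp_zero, mul_one, mul_comm P] at subst
  rw [← subst, ← intervalIntegral.integral_const_mul]
  refine intervalIntegral.integral_mono_on zero_le_one
    (Continuous.intervalIntegrable (by fun_prop) _ _)
    (Continuous.intervalIntegrable (by fun_prop) _ _) fun v hv ↦ ?_
  rw [Function.comp_apply, mul_comm, mul_comm (Real.exp 1)]
  gcongr
  exacts [hF₀ _, hv.2]

lemma integral_le_mul_log_add_two {F : ℝ → ℝ} (hF : Continuous F) (hF₀ : ∀ t, 0 ≤ F t) {T B : ℝ}
    (hT : 1 ≤ T) (h₁ : ∫ t in (0 : ℝ)..1, F t ≤ B)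
    (h : ∀ P, 1 ≤ P → P ≤ T → ∫ t in P..(Real.exp 1 * P), F t ≤ B) :
    ∫ t in (0 : ℝ)..T, F t ≤ B * (Real.log T + 2) := by
  have hB : 0 ≤ B := (intervalIntegral.integral_nonneg zero_le_one fun t _ ↦ hF₀ t).trans h₁
  have integral_exp_le (J : ℕ) : (∀ j < J, Real.exp j ≤ T) →
      ∫ t in (0 : ℝ)..(Real.exp J), F t ≤ B * (J + 1) := by
    induction J with
    | zero => intro _; simpa using h₁
    | succ J ih =>
      intro hJ
      have exp_succ : Real.exp ((J + 1 : ℕ) : ℝ) = Real.exp 1 * Real.exp J := by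
        rw [← Real.exp_add, Nat.cast_succ, add_comm]
      rw [exp_succ, ← intervalIntegral.integral_add_adjacent_intervals (b := Real.exp J)
        (hF.intervalIntegrable _ _) (hF.intervalIntegrable _ _)]
      have tail := h (Real.exp J) (Real.one_le_exp (by positivity)) (hJ J (by lia))
      push_cast
      linarith [ih fun j hj ↦ hJ j (by lia)]
  have hT₀ : 0 < T := by linarith
  calc ∫ t in (0 : ℝ)..T, F t ≤ ∫ t in (0 : ℝ)..(Real.exp ⌈Real.log T⌉₊), F t :=
        intervalIntegral.integral_mono_interval le_rfl hT₀.le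
          ((Real.log_le_iff_le_exp hT₀).1 (Nat.le_ceil _)) (.of_forall hF₀)
          (hF.intervalIntegrable _ _)
    _ ≤ B * (⌈Real.log T⌉₊ + 1) := integral_exp_le _ fun j hj ↦
        (Real.le_log_iff_exp_le hT₀).1 (Nat.lt_ceil.1 hj).le
    _ ≤ B * (Real.log T + 2) :=
        mul_le_mul_of_nonneg_left (by linarith [Nat.ceil_lt_add_one (Real.log_nonneg hT)]) hB

lemma mem_Icc_ceil_floor_div_iff {X a b : ℝ} (hX : 0 < X) (hb : 0 ≤ b) (m : ℕ) :
    m ∈ Finset.Icc ⌈a / X⌉₊ ⌊b / X⌋₊ ↔ (m : ℝ) * X ∈ Set.Icc a b := by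
  rw [Finset.mem_Icc, Nat.ceil_le, Nat.le_floor_iff (by positivity), div_le_iff₀ hX, le_div_iff₀ hX,
    Set.mem_Icc]

variable {c c' θ M : ℝ} {ω V : ℝ → ℝ}

lemma continuous_oscIntegral (hV : Continuous V) (hsupp : tsupport V ⊆ Set.Ioo (-M) M) (y : ℝ) :
    Continuous fun t ↦ oscIntegral c V t y := by
  simp only [oscIntegral, integral_eq_intervalIntegral_of_support_subset
    ((subset_tsupport V).trans hsupp)]
  exact intervalIntegral.continuous_parametric_intervalIntegral_of_continuous' (by fun_prop) _ _

lemma continuous_smoothSum (X : ℝ) : Continuous (smoothSum c M ω X) := by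
  unfold smoothSum
  fun_prop

lemma integral_norm_pow_four_le_of_norm_sub_le {f g : ℝ → ℂ} (hf : Continuous f)
    (hg : Continuous g) {E : ℝ} (h : ∀ v ∈ Set.Icc (0 : ℝ) 1, ‖f v - g v‖ ≤ E) :
    ∫ v in (0 : ℝ)..1, ‖f v‖ ^ 4 ≤ 8 * ((∫ v in (0 : ℝ)..1, ‖g v‖ ^ 4) + E ^ 4) := by
  have pointwise : ∀ v ∈ Set.Icc (0 : ℝ) 1, ‖f v‖ ^ 4 ≤ 8 * (‖g v‖ ^ 4 + E ^ 4) := fun v hv ↦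
    calc ‖f v‖ ^ 4 ≤ (‖g v‖ + E) ^ 4 := by
          gcongr
          linarith [norm_sub_norm_le (f v) (g v), h v hv]
      _ ≤ 2 ^ (4 - 1) * (‖g v‖ ^ 4 + E ^ 4) :=
          add_pow_le (norm_nonneg _) ((norm_nonneg _).trans (h v hv)) 4
      _ = 8 * (‖g v‖ ^ 4 + E ^ 4) := by norm_num
  calc ∫ v in (0 : ℝ)..1, ‖f v‖ ^ 4 ≤ ∫ v in (0 : ℝ)..1, 8 * (‖g v‖ ^ 4 + E ^ 4) :=
        intervalIntegral.integral_mono_on zero_le_one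
          (Continuous.intervalIntegrable (by fun_prop) _ _)
          (Continuous.intervalIntegrable (by fun_prop) _ _) pointwise
    _ = 8 * ((∫ v in (0 : ℝ)..1, ‖g v‖ ^ 4) + E ^ 4) := by
        rw [intervalIntegral.integral_const_mul, intervalIntegral.integral_add
          (Continuous.intervalIntegrable (by fun_prop) _ _) (by simp)]
        simp

lemma exists_norm_smoothSum_sub_sum_oscIntegral_Icc_le (hc : 1 < c) (hM : 0 ≤ M)
    (hω : ContDiff ℝ 2 ω) (hsupp : tsupport ω ⊆ Set.Ioo (Real.exp (-M)) (Real.exp M)) :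
    ∃ k₁ k₂ : ℝ, 0 < k₁ ∧ k₁ ≤ k₂ ∧ ∃ K > 0, ∀ X : ℝ, 0 < X → ∀ P : ℝ, 1 ≤ P → P ≤ 2 * X ^ 2 →
      ∀ v ∈ Set.Icc (0 : ℝ) 1, ‖smoothSum c M ω X (P * Real.exp v) -
        X * ∑ m ∈ Finset.Icc ⌈k₁ * P / X⌉₊ ⌊k₂ * P / X⌋₊,
          oscIntegral c (logWeight ω) (P * Real.exp v) (m * X)‖ ≤ K * (X / P) := by
  set k₁ := c * Real.exp (-((c - 1) * M)) / 2
  set k₂ := 2 * (c * Real.exp ((c - 1) * M))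
  have hk₁ : 0 < k₁ := by positivity
  have hk₂ : 0 < k₂ := by positivity
  have hk : k₁ ≤ k₂ * Real.exp 1 := by
    have h : Real.exp (-((c - 1) * M)) ≤ Real.exp ((c - 1) * M) :=
      Real.exp_le_exp.2 (neg_le_self (mul_nonneg (by linarith) hM))
    calc k₁ ≤ k₂ := by
          simp only [k₁, k₂]
          linarith [mul_le_mul_of_nonneg_left h (by linarith : 0 ≤ c)]
      _ ≤ k₂ * Real.exp 1 := le_mul_of_one_le_right hk₂.le (Real.one_le_exp zero_le_one)
  obtain ⟨K, hK, poisson⟩ := exists_norm_smoothSum_sub_sum_oscIntegral_le hc hM hω hsupp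
    hk₁.le (half_lt_self (by positivity)) (lt_two_mul_self (by positivity))
  refine ⟨k₁, k₂ * Real.exp 1, hk₁, hk, 3 * K, by positivity, fun X hX P hP hPX v hv ↦ ?_⟩
  have hP₀ : 0 < P := by linarith
  have le_mul_exp : P ≤ P * Real.exp v := le_mul_of_one_le_right hP₀.le (Real.one_le_exp hv.1)
  have mul_exp_le : P * Real.exp v ≤ Real.exp 1 * P := by
    rw [mul_comm]
    gcongr
    exact hv.2
  refine (poisson X hX (P * Real.exp v) (by positivity) _ fun m hm ↦ ?_).trans ?_
  · rw [mem_Icc_ceil_floor_div_iff hX (by positivity), Set.mem_Icc, not_and_or, not_le,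
      not_le] at hm
    refine hm.imp (fun h ↦ h.le.trans (by gcongr)) fun h ↦ le_trans ?_ h.le
    exact (mul_le_mul_of_nonneg_left mul_exp_le hk₂.le).trans_eq (mul_assoc ..).symm
  · have sq_le : X / (P * Real.exp v) ^ 2 ≤ X / P := by
      gcongr
      nlinarith
    have inv_le : 1 / X ≤ 2 * (X / P) := by
      rw [mul_div_assoc', div_le_div_iff₀ hX hP₀]
      linarith
    linarith [mul_le_mul_of_nonneg_left (add_le_add sq_le inv_le) hK.le]

lemma FourthMomentBound.exists_integral_smoothSum_comp_exp_le (hcc' : c.HolderConjugate c')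
    (h : FourthMomentBound c' θ) (hM : 0 ≤ M) (hω : ContDiff ℝ 2 ω)
    (hsupp : tsupport ω ⊆ Set.Ioo (Real.exp (-M)) (Real.exp M)) :
    ∃ K > 0, ∀ X : ℝ, 0 < X → ∀ P : ℝ, 1 ≤ P → P ≤ 2 * X ^ 2 →
      ∫ v in (0 : ℝ)..1, ‖smoothSum c M ω X (P * Real.exp v)‖ ^ 4 ≤
        K * (X ^ 4 * (P ^ θ / X ^ (2 + θ)) + (X / P) ^ 4) := by
  have hVsupp := tsupport_logWeight_subset hsupp
  obtain ⟨k₁, k₂, hk₁, hk, K₁, hK₁, error_le⟩ :=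
    exists_norm_smoothSum_sub_sum_oscIntegral_Icc_le hcc'.lt hM hω hsupp
  obtain ⟨K₂, hK₂, dual⟩ :=
    h.exists_integral_sum_oscIntegral_le hcc' hk₁ hk (contDiff_logWeight hω) hVsupp
  refine ⟨8 * (K₂ + K₁ ^ 4), by positivity, fun X hX P hP hPX ↦ ?_⟩
  have hP₀ : 0 < P := by linarith
  have hk₂ : 0 < k₂ := hk₁.trans_le hk
  set s := Finset.Icc ⌈k₁ * P / X⌉₊ ⌊k₂ * P / X⌋₊
  have mem_s : ∀ m ∈ s, (m : ℝ) * X ∈ Set.Icc (k₁ * P) (k₂ * P) := fun m hm ↦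
    (mem_Icc_ceil_floor_div_iff hX (mul_pos hk₂ hP₀).le m).1 hm
  set g : ℝ → ℂ := fun v ↦ X * ∑ m ∈ s, oscIntegral c (logWeight ω) (P * Real.exp v) (m * X)
  have cont_g : Continuous g := continuous_const.mul <| continuous_finsetSum _ fun m _ ↦
    (continuous_oscIntegral (contDiff_logWeight hω).continuous hVsupp _).comp (by fun_prop)
  set Q := P ^ θ / X ^ (2 + θ)
  have : 0 ≤ Q := by positivity
  calc ∫ v in (0 : ℝ)..1, ‖smoothSum c M ω X (P * Real.exp v)‖ ^ 4
    _ ≤ 8 * ((∫ v in (0 : ℝ)..1, ‖g v‖ ^ 4) + (K₁ * (X / P)) ^ 4) :=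
      integral_norm_pow_four_le_of_norm_sub_le ((continuous_smoothSum X).comp (by fun_prop))
        cont_g (error_le X hX P hP hPX)
    _ ≤ 8 * (X ^ 4 * (K₂ * Q) + (K₁ * (X / P)) ^ 4) := by
      gcongr
      simp only [g, norm_mul, mul_pow, Complex.norm_real, Real.norm_of_nonneg hX.le,
        intervalIntegral.integral_const_mul]
      gcongr
      exact dual X hX P hP₀ hPX s mem_s
    _ ≤ 8 * (K₂ + K₁ ^ 4) * (X ^ 4 * Q + (X / P) ^ 4) := by
      have cross : 0 ≤ K₂ * (X / P) ^ 4 + K₁ ^ 4 * (X ^ 4 * Q) := by positivity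
      rw [mul_pow]
      linarith

end SmoothSum

section SmoothFourthMoment

variable {c c' θ M : ℝ} {ω : ℝ → ℝ}

lemma exists_norm_smoothSum_le (hM : 0 ≤ M) (hω : Continuous ω)
    (hsupp : tsupport ω ⊆ Set.Ioo (Real.exp (-M)) (Real.exp M)) :
    ∃ B > 0, ∀ X : ℝ, 1 ≤ X → ∀ t : ℝ, ‖smoothSum c M ω X t‖ ≤ B * X := by
  have compact : HasCompactSupport ω :=
    isCompact_Icc.of_isClosed_subset (isClosed_tsupport ω) (hsupp.trans Set.Ioo_subset_Icc_self)
  obtain ⟨B, hB⟩ := hω.bounded_above_of_compact_support compact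
  have hB₀ : 0 ≤ B := (norm_nonneg _).trans (hB 0)
  refine ⟨2 * Real.exp M * (B + 1), by positivity, fun X hX t ↦ ?_⟩
  have one_le : 1 ≤ X * Real.exp M := one_le_mul_of_one_le_of_one_le hX (Real.one_le_exp hM)
  calc ‖smoothSum c M ω X t‖ ≤ ⌈X * Real.exp M⌉₊ * (B + 1) := by
        simpa only [smoothSum, Finset.card_range] using
          norm_expSum_le_card_mul (s := Finset.range ⌈X * Real.exp M⌉₊)
            (fun n : ℕ ↦ ((n : ℝ) / X) ^ c)
            (fun n _ ↦ (Complex.norm_real (ω (n / X))).trans_le ((hB _).trans (by linarith))) t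
    _ ≤ 2 * (X * Real.exp M) * (B + 1) := by
        gcongr
        linarith [Nat.ceil_lt_add_one (zero_le_one.trans one_le)]
    _ = 2 * Real.exp M * (B + 1) * X := by ring

lemma FourthMomentBound.exists_integral_smoothSum_block_le (hcc' : c.HolderConjugate c')
    (hθ : 0 ≤ θ) (h : FourthMomentBound c' θ) (hM : 0 ≤ M) (hω : ContDiff ℝ 2 ω)
    (hsupp : tsupport ω ⊆ Set.Ioo (Real.exp (-M)) (Real.exp M)) :
    ∃ K > 0, ∀ X : ℝ, 1 ≤ X → ∀ P : ℝ, 1 ≤ P → P ≤ 2 * X ^ (2 - θ / (1 + θ)) →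
      ∫ t in P..(Real.exp 1 * P), ‖smoothSum c M ω X t‖ ^ 4 ≤ K * X ^ 4 := by
  obtain ⟨K, hK, block⟩ := h.exists_integral_smoothSum_comp_exp_le hcc' hM hω hsupp
  refine ⟨Real.exp 1 * K * (2 ^ (1 + θ) + 1), by positivity, fun X hX P hP hPX ↦ ?_⟩
  have hX₀ : 0 < X := by linarith
  have hP₀ : 0 < P := by linarith
  have hPX₂ : P ≤ 2 * X ^ 2 := hPX.trans <| by
    rw [← Real.rpow_two]
    gcongr
    exact sub_le_self 2 (by positivity)
  -- The range of `P` is chosen so that the dual term `P ^ (1 + θ)` balances `X ^ (2 + θ)`.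
  have main_le : P * (P ^ θ / X ^ (2 + θ)) ≤ 2 ^ (1 + θ) := by
    rw [mul_div_assoc', div_le_iff₀ (by positivity), ← Real.rpow_one_add' hP₀.le (by linarith)]
    calc P ^ (1 + θ) ≤ (2 * X ^ (2 - θ / (1 + θ))) ^ (1 + θ) := by gcongr
      _ = 2 ^ (1 + θ) * X ^ (2 + θ) := by
        rw [Real.mul_rpow zero_le_two (by positivity), ← Real.rpow_mul hX₀.le]
        congr 2
        field_simp
        ring
  have error_le : P * (X / P) ^ 4 ≤ X ^ 4 := by
    rw [div_pow, mul_div_assoc', div_le_iff₀ (pow_pos hP₀ 4), mul_comm]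
    gcongr ?_ * ?_
    exact le_self_pow₀ hP (by norm_num)
  calc ∫ t in P..(Real.exp 1 * P), ‖smoothSum c M ω X t‖ ^ 4
    _ ≤ Real.exp 1 * P * ∫ v in (0 : ℝ)..1, ‖smoothSum c M ω X (P * Real.exp v)‖ ^ 4 :=
      integral_le_mul_integral_comp_mul_exp (F := fun t ↦ ‖smoothSum c M ω X t‖ ^ 4)
        ((continuous_smoothSum X).norm.pow 4) (fun _ ↦ by positivity) hP₀
    _ ≤ Real.exp 1 * P * (K * (X ^ 4 * (P ^ θ / X ^ (2 + θ)) + (X / P) ^ 4)) := by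
      gcongr
      exact block X hX₀ P hP hPX₂
    _ = Real.exp 1 * K * (P * (P ^ θ / X ^ (2 + θ)) * X ^ 4 + P * (X / P) ^ 4) := by ring
    _ ≤ Real.exp 1 * K * (2 ^ (1 + θ) * X ^ 4 + X ^ 4) := by gcongr
    _ = Real.exp 1 * K * (2 ^ (1 + θ) + 1) * X ^ 4 := by ring

lemma FourthMomentBound.exists_integral_smoothSum_le (hcc' : c.HolderConjugate c') (hθ : 0 ≤ θ)
    (h : FourthMomentBound c' θ) (hM : 0 ≤ M) (hω : ContDiff ℝ 2 ω)
    (hsupp : tsupport ω ⊆ Set.Ioo (Real.exp (-M)) (Real.exp M)) :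
    ∃ K > 0, ∀ X : ℝ, 1 ≤ X →
      ∫ t in (0 : ℝ)..2 * X ^ (2 - θ / (1 + θ)), ‖smoothSum c M ω X t‖ ^ 4 ≤
        K * X ^ 4 * (2 * Real.log X + 3) := by
  obtain ⟨B, hB, trivial_le⟩ := exists_norm_smoothSum_le (c := c) hM hω.continuous hsupp
  obtain ⟨K, hK, block⟩ := h.exists_integral_smoothSum_block_le hcc' hθ hM hω hsupp
  refine ⟨B ^ 4 + K, by positivity, fun X hX ↦ ?_⟩
  have hX₀ : 0 < X := by linarith
  have hκ : 0 ≤ θ / (1 + θ) := by positivity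
  have hκ₁ : θ / (1 + θ) ≤ 1 := div_le_one_of_le₀ (by linarith) (by positivity)
  have cont : Continuous fun t ↦ ‖smoothSum c M ω X t‖ ^ 4 := (continuous_smoothSum X).norm.pow 4
  set T := 2 * X ^ (2 - θ / (1 + θ))
  have one_le_T : 1 ≤ T := by
    linarith [show T = 2 * X ^ (2 - θ / (1 + θ)) from rfl,
      Real.one_le_rpow hX (by linarith : 0 ≤ 2 - θ / (1 + θ))]
  have log_T_le : Real.log T ≤ 2 * Real.log X + 1 := by
    have hlog := Real.log_nonneg hX
    rw [Real.log_mul two_ne_zero (by positivity), Real.log_rpow hX₀]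
    linarith [Real.log_two_lt_d9, mul_nonneg hκ hlog]
  have unit_le : ∫ t in (0 : ℝ)..1, ‖smoothSum c M ω X t‖ ^ 4 ≤ (B ^ 4 + K) * X ^ 4 :=
    calc ∫ t in (0 : ℝ)..1, ‖smoothSum c M ω X t‖ ^ 4 ≤ ∫ _t in (0 : ℝ)..1, (B * X) ^ 4 :=
          intervalIntegral.integral_mono_on zero_le_one (cont.intervalIntegrable _ _) (by simp)
            fun t _ ↦ by gcongr; exact trivial_le X hX t
      _ = B ^ 4 * X ^ 4 := by simp [mul_pow]
      _ ≤ (B ^ 4 + K) * X ^ 4 := by gcongr; linarith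
  calc ∫ t in (0 : ℝ)..T, ‖smoothSum c M ω X t‖ ^ 4
    _ ≤ (B ^ 4 + K) * X ^ 4 * (Real.log T + 2) :=
      integral_le_mul_log_add_two cont (fun _ ↦ by positivity) one_le_T unit_le
        fun P hP hPT ↦ (block X hX P hP hPT).trans (by gcongr; linarith [pow_nonneg hB.le 4])
    _ ≤ (B ^ 4 + K) * X ^ 4 * (2 * Real.log X + 3) :=
      mul_le_mul_of_nonneg_left (by linarith) (by positivity)

end SmoothFourthMoment

section Iteration

variable {c c' θ M Z : ℝ} {ω : ℝ → ℝ}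

lemma exists_contDiff_eq_one_on_Icc {R : ℝ} (hR : 1 ≤ R) :
    ∃ ω : ℝ → ℝ, ContDiff ℝ 2 ω ∧ (∀ x, 0 ≤ ω x) ∧ (∀ x ∈ Set.Icc (1 / R) 1, ω x = 1) ∧
      ∃ M, 0 ≤ M ∧ tsupport ω ⊆ Set.Ioo (Real.exp (-M)) (Real.exp M) := by
  have hR₀ : 0 < R := by linarith
  set r := 1 / R
  have hr : 0 < r := by positivity
  let bump : ContDiffBump ((1 + r) / 2) := ⟨1 / 2, 1 / 2 + r / 4, by norm_num, by linarith⟩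
  refine ⟨bump, bump.contDiff, fun x ↦ bump.nonneg, fun x hx ↦ bump.one_of_mem_closedBall ?_,
    Real.log (8 * R), Real.log_nonneg (by linarith), ?_⟩
  · rw [Real.closedBall_eq_Icc]
    constructor <;> linarith [hx.1, hx.2, show bump.rIn = 1 / 2 from rfl]
  · have hrR : (8 * R)⁻¹ = r / 8 := by
      simp only [r]
      field_simp
    have hr₁ : r ≤ 1 := div_le_one_of_le₀ hR hR₀.le
    rw [bump.tsupport_eq, Real.closedBall_eq_Icc, Real.exp_neg, Real.exp_log (by positivity), hrR]
    refine Set.Icc_subset_Ioo ?_ ?_ <;> linarith [show bump.rOut = 1 / 2 + r / 4 from rfl]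

lemma expSum_indicator_of_subset {ι : Type*} {s t : Finset ι} (hst : s ⊆ t) (a : ι → ℂ)
    (μ : ι → ℝ) : expSum t ((s : Set ι).indicator a) μ = expSum s a μ := by
  funext x
  refine (Finset.sum_subset hst fun i _ hi ↦ ?_).symm.trans (Finset.sum_congr rfl fun i hi ↦ ?_)
  · rw [Set.indicator_of_notMem (by simpa using hi), zero_mul]
  · rw [Set.indicator_of_mem (by simpa using hi)]

lemma integral_norm_expSum_pow_four_le_smoothSum (hω : ∀ x, 0 ≤ ω x) {s : Finset ℕ} {a : ℕ → ℂ}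
    (hs : ∀ n ∈ s, (n : ℝ) < Z * Real.exp M) (ha : ∀ n ∈ s, ‖a n‖ ≤ ω (n / Z)) {T : ℝ}
    (hT : 0 < T) :
    ∫ t in (0 : ℝ)..T, ‖expSum s a (fun n ↦ ((n : ℝ) / Z) ^ c) t‖ ^ 4 ≤
      4 * ∫ t in (0 : ℝ)..2 * T, ‖smoothSum c M ω Z t‖ ^ 4 := by
  have hsub : s ⊆ Finset.range ⌈Z * Real.exp M⌉₊ := fun n hn ↦
    Finset.mem_range.2 (Nat.lt_ceil.2 (hs n hn))
  rw [← expSum_indicator_of_subset hsub]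
  refine integral_norm_expSum_pow_four_le_of_norm_le _ (fun n _ ↦ ?_) hT
  by_cases hn : n ∈ s
  · simpa [Set.indicator_of_mem, hn] using ha n hn
  · simpa [Set.indicator_of_notMem, hn] using hω _

lemma two_mul_log_add_three_le_mul_rpow (hZ : 1 ≤ Z) {ε : ℝ} (hε : 0 < ε) :
    2 * Real.log Z + 3 ≤ (2 / ε + 3) * Z ^ ε := by
  calc 2 * Real.log Z + 3 ≤ 2 * (Z ^ ε / ε) + 3 * Z ^ ε := by
        linarith [Real.log_le_rpow_div (zero_le_one.trans hZ) hε, Real.one_le_rpow hZ hε.le]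
    _ = (2 / ε + 3) * Z ^ ε := by ring

lemma FourthMomentBound.of_holderConjugate (hcc' : c.HolderConjugate c') (hθ : 0 ≤ θ)
    (h : FourthMomentBound c' θ) {ε : ℝ} (hε : 0 < ε) :
    FourthMomentBound c (θ / (1 + θ) + ε) := by
  intro R hR
  obtain ⟨ω, hω, hω₀, hω₁, M, hM, hsupp⟩ := exists_contDiff_eq_one_on_Icc hR
  obtain ⟨K, hK, smooth_le⟩ := h.exists_integral_smoothSum_le hcc' hθ hM hω hsupp
  refine ⟨8 * K * (2 / ε + 3), by positivity, fun Z hZ s a hs ha ↦ ?_⟩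
  have hZ₀ : 0 < Z := by linarith
  set κ := θ / (1 + θ)
  set μ : ℕ → ℝ := fun n ↦ ((n : ℝ) / Z) ^ c
  have weight_eq_one : ∀ n ∈ s, ω (n / Z) = 1 := fun n hn ↦ hω₁ _ <| by
    rw [Set.mem_Icc, le_div_iff₀ hZ₀, div_le_one hZ₀, one_div_mul_eq_div]
    exact hs n hn
  have lt_mul_exp : ∀ n ∈ s, (n : ℝ) < Z * Real.exp M := fun n hn ↦ by
    have : (n : ℝ) / Z ∈ tsupport ω := subset_tsupport ω (by simp [weight_eq_one n hn])
    rw [← div_lt_iff₀' hZ₀]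
    exact (hsupp this).2
  have translate_le (k : ℕ) :
      ∫ t in (0 : ℝ)..Z ^ (2 - κ), ‖expSum s a μ (t + k * Z ^ (2 - κ))‖ ^ 4 ≤
        4 * (K * Z ^ 4 * (2 * Real.log Z + 3)) := by
    simp only [expSum_add]
    refine (integral_norm_expSum_pow_four_le_smoothSum hω₀ lt_mul_exp (fun n hn ↦ ?_)
      (by positivity)).trans (by gcongr; exact smooth_le Z hZ)
    rw [norm_mul, norm_e, mul_one, weight_eq_one n hn]
    exact ha n hn
  calc ∫ t in (0 : ℝ)..Z ^ 2, ‖expSum s a μ t‖ ^ 4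
    _ ≤ (Z ^ 2 / Z ^ (2 - κ) + 1) * (4 * (K * Z ^ 4 * (2 * Real.log Z + 3))) :=
      integral_le_of_forall_integral_translate_le (by fun_prop) (fun _ ↦ by positivity)
        (by positivity) (by positivity) translate_le
    _ ≤ (2 * Z ^ κ) * (4 * (K * Z ^ 4 * ((2 / ε + 3) * Z ^ ε))) := by
      have : Z ^ 2 / Z ^ (2 - κ) = Z ^ κ := by
        rw [← Real.rpow_two, ← Real.rpow_sub hZ₀, sub_sub_cancel]
      have hlog := Real.log_nonneg hZ
      gcongr
      · linarith [Real.one_le_rpow hZ (by positivity : 0 ≤ κ)]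
      · exact two_mul_log_add_three_le_mul_rpow hZ hε
    _ = 8 * K * (2 / ε + 3) * Z ^ (4 + (κ + ε)) := by
      rw [Real.rpow_add hZ₀, Real.rpow_add hZ₀, Real.rpow_ofNat]
      ring

lemma FourthMomentBound.max_mul_inv (hcc' : c.HolderConjugate c') {η : ℝ} (hη : 0 < η)
    (hηθ : η ≤ θ) (h : FourthMomentBound c' θ) :
    FourthMomentBound c (max η (θ * (1 + η / 2)⁻¹)) := by
  have hθ : 0 < θ := by linarith
  have lt : θ / (1 + θ) < θ * (1 + η / 2)⁻¹ := by
    rw [← div_eq_mul_inv]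
    gcongr
    linarith
  exact (h.of_holderConjugate hcc' hθ.le (sub_pos.2 lt)).mono
    ((add_sub_cancel ..).trans_le (le_max_right ..))

theorem fourthMomentBound (hc : 1 < c) {η : ℝ} (hη : 0 < η) : FourthMomentBound c η := by
  set q := (1 + η / 2)⁻¹
  have hq₀ : 0 < q := by positivity
  have hq₁ : q < 1 := inv_lt_one_of_one_lt₀ (by linarith)
  have iterate (n : ℕ) : ∀ {c c' : ℝ}, c.HolderConjugate c' →
      FourthMomentBound c (max η (2 * q ^ n)) := by
    induction n with
    | zero => exact fun _ ↦ (fourthMomentBound_two _).mono (by simp)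
    | succ n ih =>
      refine fun hcc' ↦ ((ih hcc'.symm).max_mul_inv hcc' hη (le_max_left ..)).mono ?_
      rw [max_mul_of_nonneg _ _ hq₀.le, pow_succ, ← mul_assoc]
      exact max_le (le_max_left ..)
        (max_le_max (mul_le_of_le_one_right hη.le hq₁.le) le_rfl)
  obtain ⟨n, hn⟩ := exists_pow_lt_of_lt_one (half_pos hη) hq₁
  exact (iterate n (.conjExponent hc)).mono (max_le le_rfl (by linarith))

end Iteration

section PrimeSum

variable {c η X : ℝ}

lemma S_eq_expSum (hX : 0 < X) (x : ℝ) :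
    S X c x = expSum ((Finset.range (⌈X⌉₊ + 1)).filter
      (fun p : ℕ ↦ p.Prime ∧ X / 2 < (p : ℝ) ∧ (p : ℝ) ≤ X)) (fun p ↦ (Real.log p : ℂ))
      (fun p ↦ ((p : ℝ) / X) ^ c) (x * X ^ c) := by
  refine Finset.sum_congr rfl fun p _ ↦ ?_
  beta_reduce
  rw [Real.div_rpow p.cast_nonneg hX.le, mul_assoc, mul_div_cancel₀ _ (by positivity), mul_comm x]

lemma continuous_S (X c : ℝ) : Continuous (S X c) := by
  unfold S
  fun_prop

lemma exists_integral_norm_S_pow_four_le (hc : 1 < c) (hη : 0 < η) :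
    ∃ C > 0, ∀ X : ℝ, 1 ≤ X → ∀ T : ℝ, 0 ≤ T →
      ∫ x in (0 : ℝ)..T, ‖S X c x‖ ^ 4 ≤
        C * Real.log X ^ 4 * (T * X ^ 2 + X ^ (4 - c)) * X ^ η := by
  obtain ⟨C, hC, bound⟩ := (fourthMomentBound hc hη).exists_integral_le one_le_two
  refine ⟨C, hC, fun X hX T hT ↦ ?_⟩
  have hX₀ : 0 < X := by linarith
  have hlog := Real.log_nonneg hX
  set s := (Finset.range (⌈X⌉₊ + 1)).filter
    (fun p : ℕ ↦ p.Prime ∧ X / 2 < (p : ℝ) ∧ (p : ℝ) ≤ X)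
  have mem_Icc : ∀ p ∈ s, (p : ℝ) ∈ Set.Icc (X / 2) X := fun p hp ↦
    let ⟨_, hlt, hle⟩ := (Finset.mem_filter.1 hp).2
    ⟨hlt.le, hle⟩
  have norm_log_le : ∀ p ∈ s, ‖(Real.log p : ℂ)‖ ≤ Real.log X := fun p hp ↦ by
    have hp₁ : (1 : ℝ) ≤ p := Nat.one_le_cast.2 (Finset.mem_filter.1 hp).2.1.one_le
    rw [Complex.norm_real, Real.norm_of_nonneg (Real.log_nonneg hp₁)]
    exact Real.log_le_log (by linarith) (mem_Icc p hp).2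
  simp only [S_eq_expSum hX₀]
  rw [intervalIntegral.integral_comp_mul_right
    (fun t ↦ ‖expSum s (fun p ↦ (Real.log p : ℂ)) (fun p ↦ ((p : ℝ) / X) ^ c) t‖ ^ 4)
    (by positivity), zero_mul, smul_eq_mul]
  calc _ ≤ (X ^ c)⁻¹ * ((T * X ^ c / X ^ 2 + 1) * (C * Real.log X ^ 4 * X ^ (4 + η))) := by
        gcongr
        exact bound X hX s _ _ hlog mem_Icc norm_log_le _ (by positivity)
    _ = C * Real.log X ^ 4 * (T * X ^ 2 + X ^ (4 - c)) * X ^ η := by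
        rw [Real.rpow_add hX₀, Real.rpow_sub hX₀, Real.rpow_ofNat]
        field_simp

lemma log_pow_le_mul_rpow (hX : 0 ≤ X) (hη : 0 < η) {n : ℕ} (hn : n ≠ 0) (hlog : 0 ≤ Real.log X) :
    Real.log X ^ n ≤ (n / η) ^ n * X ^ η := by
  calc Real.log X ^ n ≤ (X ^ (η / n) / (η / n)) ^ n := by
        gcongr
        exact Real.log_le_rpow_div hX (by positivity)
    _ = (n / η) ^ n * X ^ η := by
        rw [div_pow, ← Real.rpow_mul_natCast hX, div_mul_cancel₀ _ (by positivity),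
          ← inv_div η, inv_pow, div_eq_inv_mul]

lemma integral_mul_norm_sq_le {f : ℝ → ℝ} (hf : Continuous f) (hf₀ : ∀ x, 0 ≤ f x) {Φ : ℝ → ℂ}
    (hΦ : AEStronglyMeasurable Φ) (hΦ₁ : ∀ x, ‖Φ x‖ ≤ 1) {a b : ℝ} (ha : 0 ≤ a) (hab : a ≤ b) :
    ∫ x in a..b, f x * ‖Φ x‖ ^ 2 ≤ ∫ x in (0 : ℝ)..b, f x := by
  have mul_le (x : ℝ) : f x * ‖Φ x‖ ^ 2 ≤ f x :=
    mul_le_of_le_one_right (hf₀ x) (pow_le_one₀ (norm_nonneg _) (hΦ₁ x))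
  have integrable : IntervalIntegrable (fun x ↦ f x * ‖Φ x‖ ^ 2) volume a b :=
    (hf.intervalIntegrable a b).mono_fun'
      (hf.aestronglyMeasurable.mul (hΦ.norm.pow 2)).restrict <| .of_forall fun x ↦
        (Real.norm_of_nonneg (mul_nonneg (hf₀ x) (by positivity))).trans_le (mul_le x)
  calc ∫ x in a..b, f x * ‖Φ x‖ ^ 2 ≤ ∫ x in a..b, f x :=
        intervalIntegral.integral_mono_on hab integrable (hf.intervalIntegrable _ _)
          fun x _ ↦ mul_le x
    _ ≤ ∫ x in (0 : ℝ)..b, f x :=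
        intervalIntegral.integral_mono_interval ha hab le_rfl (.of_forall hf₀)
          (hf.intervalIntegrable _ _)

lemma stronglyMeasurable_fourier {φ : ℝ → ℝ} (hφ : Continuous φ) :
    StronglyMeasurable fun x : ℝ ↦ ∫ y : ℝ, e (-(x * y)) * (φ y : ℂ) :=
  StronglyMeasurable.integral_prod_right' (f := fun p : ℝ × ℝ ↦ e (-(p.1 * p.2)) * (φ p.2 : ℂ))
    (Continuous.stronglyMeasurable (by fun_prop))

theorem stmt19_general (hc : 1 < c) (hη : 0 < η) :
    ∃ C > 0, ∃ X₀ : ℝ, ∀ X ≥ X₀, ∀ Φ : ℝ → ℂ, AEStronglyMeasurable Φ → (∀ x, ‖Φ x‖ ≤ 1) →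
      ∫ x in (X ^ (1 - c - η))..(Real.log X ^ 5), ‖S X c x‖ ^ 4 * ‖Φ x‖ ^ 2 ≤
        C * (X ^ (4 - c) + X ^ 2) * X ^ η := by
  obtain ⟨C, hC, bound⟩ := exists_integral_norm_S_pow_four_le hc (half_pos hη)
  refine ⟨C * (9 / (η / 2)) ^ 9, by positivity, Real.exp 1, fun X hX Φ hΦ hΦ₁ ↦ ?_⟩
  have hX₀ : 0 < X := (Real.exp_pos 1).trans_le hX
  have hX₁ : 1 ≤ X := (Real.one_le_exp zero_le_one).trans hX
  have hlog : 1 ≤ Real.log X := (Real.le_log_iff_exp_le hX₀).2 hX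
  have le_one : X ^ (1 - c - η) ≤ 1 := Real.rpow_le_one_of_one_le_of_nonpos hX₁ (by linarith)
  have one_le : 1 ≤ Real.log X ^ 5 := one_le_pow₀ hlog
  calc ∫ x in (X ^ (1 - c - η))..(Real.log X ^ 5), ‖S X c x‖ ^ 4 * ‖Φ x‖ ^ 2
    _ ≤ ∫ x in (0 : ℝ)..(Real.log X ^ 5), ‖S X c x‖ ^ 4 :=
      integral_mul_norm_sq_le ((continuous_S X c).norm.pow 4)
        (fun _ ↦ pow_nonneg (norm_nonneg _) 4) hΦ hΦ₁ (by positivity) (le_one.trans one_le)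
    _ ≤ C * Real.log X ^ 4 * (Real.log X ^ 5 * X ^ 2 + X ^ (4 - c)) * X ^ (η / 2) :=
      bound X hX₁ _ (by positivity)
    _ ≤ C * Real.log X ^ 4 * (Real.log X ^ 5 * X ^ 2 + Real.log X ^ 5 * X ^ (4 - c)) *
        X ^ (η / 2) := by
      gcongr
      exact le_mul_of_one_le_left (by positivity) one_le
    _ = C * (X ^ (4 - c) + X ^ 2) * X ^ (η / 2) * Real.log X ^ 9 := by ring
    _ ≤ C * (X ^ (4 - c) + X ^ 2) * X ^ (η / 2) * ((9 / (η / 2)) ^ 9 * X ^ (η / 2)) := by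
      gcongr
      exact mod_cast log_pow_le_mul_rpow hX₀.le (half_pos hη) (n := 9) (by norm_num) (by linarith)
    _ = C * (9 / (η / 2)) ^ 9 * (X ^ (4 - c) + X ^ 2) * X ^ η := by
      rw [← add_halves η, Real.rpow_add hX₀, add_halves]
      ring

end PrimeSum

/-- formula (3.9): for `1 < c < 37/18`, `c ≠ 2`, sufficiently small
`η > 0`, and sufficiently large `X`, with `τ = X^{1−c−η}`, `K = (log X)⁵`,
`ε = (log X)⁻²`, and a smoothing function `φ` as in Lemma 2.1 (with `a = 9ε/10`,
`b = ε/10`, `k = ⌈log X⌉`) with Fourier transform `Φ`, one has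
`∫_τ^K |S(x)|⁴ |Φ(x)|² dx ≪_{c,η} (X^{4−c} + X²) X^η`. -/
theorem stmt19 (c : ℝ) (hc1 : 1 < c) (hc2 : c < 37 / 18) (hc3 : c ≠ 2) :
    ∃ η₀ > 0, ∀ η : ℝ, 0 < η → η < η₀ →
    ∃ C > 0, ∃ X₀ : ℝ, ∀ X ≥ X₀,
    ∀ τ K ε : ℝ, ∀ k : ℕ, ∀ a b : ℝ,
      τ = X ^ (1 - c - η) → K = (Real.log X) ^ 5 → ε = ((Real.log X) ^ 2)⁻¹ →
      k = ⌈Real.log X⌉₊ → a = 9 * ε / 10 → b = ε / 10 →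
    ∀ φ : ℝ → ℝ, ∀ Φ : ℝ → ℂ,
      ContDiff ℝ (k : ℕ∞) φ →
      (∀ y, |y| ≤ a - b → φ y = 1) →
      (∀ y, a - b < |y| → |y| < a + b → 0 < φ y ∧ φ y < 1) →
      (∀ y, a + b ≤ |y| → φ y = 0) →
      (∀ x, Φ x = ∫ y : ℝ, e (-(x * y)) * (φ y : ℂ)) →
      (∀ x, ‖Φ x‖ ≤ 2 * a) →
      (∀ x : ℝ, x ≠ 0 → ‖Φ x‖ ≤
        min (1 / (Real.pi * |x|))
          (1 / (Real.pi * |x|) * ((k : ℝ) / (2 * Real.pi * |x| * b)) ^ k)) →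
      (∫ x in τ..K, ‖S X c x‖ ^ 4 * ‖Φ x‖ ^ 2) ≤ C * (X ^ (4 - c) + X ^ 2) * X ^ η := by
  refine ⟨1, one_pos, fun η hη _ ↦ ?_⟩
  obtain ⟨C, hC, X₀, bound⟩ := stmt19_general hc1 hη
  refine ⟨C, hC, max X₀ (Real.exp 2), ?_⟩
  rintro X hX _ _ ε k a b rfl rfl hε - ha - φ Φ hφ - - - hΦ hΦ_le -
  obtain rfl : Φ = _ := funext hΦ
  have two_le_log : 2 ≤ Real.log X :=
    (Real.le_log_iff_exp_le ((Real.exp_pos 2).trans_le (le_of_max_le_right hX))).2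
      (le_of_max_le_right hX)
  have two_mul_le_one : 2 * a ≤ 1 := by
    have : ε ≤ 1 / 2 := by
      rw [hε, one_div]
      gcongr
      nlinarith
    linarith
  exact bound X (le_of_max_le_left hX) _
    (stronglyMeasurable_fourier hφ.continuous).aestronglyMeasurable
    fun x ↦ (hΦ_le x).trans two_mul_le_one
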